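/- arXiv:2312.14128 — 2 statements merged into one kernel-verified Lean document; each statement's English description precedes it below -/
import Mathlib

section
/- Let λ ∈ ℂ with λ ≠ 0 and λ² ≠ 1, and let c₁, c₂, c₃ ∈ ℂ. An element K ∈ ℂ_λ[S²] satisfies the three equations ∑_{j=1}^{3} y^i y^j [y^j, K] + 2iλ ∑_{j,m=1}^{3} ε_{ijm} [y^j, K] y^m = c_i · 1 (for i = 1, 2, 3) if and only if K = K₀ · 1 + ∑_{i=1}^{3} (c_i / (4λ²(1−λ²))) y^i for some K₀ ∈ ℂ. Here [a,b] := ab − ba. -/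
noncomputable section

/-- The totally antisymmetric Levi-Civita symbol on three indices with ε₀₁₂ = 1
(indices written 1,2,3 in the paper). -/
def epsC (i j k : Fin 3) : ℂ :=
  ((((i : ℤ) - (j : ℤ)) * ((j : ℤ) - (k : ℤ)) * ((k : ℤ) - (i : ℤ))) / 2 : ℤ)

/-- The defining relations of the fuzzy sphere `ℂ_λ[S²]`:
`y^i y^j − y^j y^i = 2iλ ε_{ijk} y^k` and `∑ (y^i)² = (1 − λ²)·1`. -/
inductive FuzzyRel (lam : ℂ) : FreeAlgebra ℂ (Fin 3) → FreeAlgebra ℂ (Fin 3) → Prop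
  | comm (i j : Fin 3) :
      FuzzyRel lam
        (FreeAlgebra.ι ℂ i * FreeAlgebra.ι ℂ j - FreeAlgebra.ι ℂ j * FreeAlgebra.ι ℂ i)
        (∑ k, (2 * Complex.I * lam * epsC i j k) • FreeAlgebra.ι ℂ k)
  | sphere :
      FuzzyRel lam (∑ i, FreeAlgebra.ι ℂ i * FreeAlgebra.ι ℂ i)
        ((1 - lam ^ 2) • (1 : FreeAlgebra ℂ (Fin 3)))

/-- The fuzzy sphere `ℂ_λ[S²]`: the quotient of the free algebra on three generators by the
two-sided ideal generated by the defining relations. -/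
abbrev FuzzySphere (lam : ℂ) := RingQuot (FuzzyRel lam)

/-- The generators `y^i` of the fuzzy sphere. -/
def yGen (lam : ℂ) (i : Fin 3) : FuzzySphere lam :=
  RingQuot.mkAlgHom ℂ (FuzzyRel lam) (FreeAlgebra.ι ℂ i)

/-!
Write `E K = ∑ j, y j * [y j, K]`. Multiplying the `i`-th equation on the left by `y i` and summing
over `i` kills the cross product, since `∑ i, y i * ([y, K] × y) i = 0`, and leaves
`(1 - λ²) E K = ∑ i, c i • y i`. As every `y i` is an eigenvector of `E`, this determines `E K` as
the value of `E` on an explicit combination of the `y i`, so everything rests on `ker E = ℂ · 1`.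
With `[y i, y (i + 1)] = μ y (i + 2)`, the operator `E` acts on the elements of degree at most `n`,
modulo those of smaller degree, as the scalar `-n (n + 1) μ² / 2`, which vanishes only for `n = 0`.
To see this, use `E (y k * v) = y k * E v - μ² y k * v + μ (y × [y, v]) k`, where, to top degree,
`y × [y, v]` is `-n μ y v` for `v` of degree `n`.
-/

section

attribute [local instance] LieRing.ofAssociativeRing

section Filtration

variable {R A ι : Type*} [CommRing R] [Ring A] [Algebra R A] {y : ι → A} {n : ℕ} {v : A}

variable (R) in
/-- The filtration of an algebra by degree in a family `y`: the span of the products of at most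
`n` of the elements `y i`. -/
def degreeLE (y : ι → A) (n : ℕ) : Submodule R A :=
  (1 ⊔ Submodule.span R (Set.range y)) ^ n

theorem mem_degreeLE_zero : v ∈ degreeLE R y 0 ↔ ∃ r : R, r • (1 : A) = v := by
  simp only [degreeLE, pow_zero, Submodule.mem_one, Algebra.algebraMap_eq_smul_one]

theorem degreeLE_succ (n : ℕ) :
    degreeLE R y (n + 1) = degreeLE R y n ⊔ Submodule.span R (Set.range y) * degreeLE R y n := by
  rw [degreeLE, pow_succ', Submodule.sup_mul, one_mul, ← degreeLE]

theorem degreeLE_mono : Monotone (degreeLE R y) :=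
  monotone_nat_of_le_succ fun n => degreeLE_succ (R := R) (y := y) n ▸ le_sup_left

theorem one_mem_degreeLE : (1 : A) ∈ degreeLE R y n :=
  degreeLE_mono n.zero_le (mem_degreeLE_zero.mpr ⟨1, one_smul R 1⟩)

theorem mul_mem_degreeLE_add {m : ℕ} {u : A} (hu : u ∈ degreeLE R y m) (hv : v ∈ degreeLE R y n) :
    u * v ∈ degreeLE R y (m + n) := by
  rw [degreeLE, pow_add]
  exact Submodule.mul_mem_mul hu hv

theorem mul_mem_degreeLE_succ {u : A} (hu : u ∈ degreeLE R y 1) (hv : v ∈ degreeLE R y n) :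
    u * v ∈ degreeLE R y (n + 1) :=
  add_comm 1 n ▸ mul_mem_degreeLE_add hu hv

theorem gen_mem_degreeLE_one (i : ι) : y i ∈ degreeLE R y 1 := by
  rw [degreeLE, pow_one]
  exact Submodule.mem_sup_right (Submodule.subset_span ⟨i, rfl⟩)

theorem degreeLE_succ_le {N : Submodule R A} (hle : degreeLE R y n ≤ N)
    (hmul : ∀ i, ∀ v ∈ degreeLE R y n, y i * v ∈ N) : degreeLE R y (n + 1) ≤ N := by
  rw [degreeLE_succ]
  refine sup_le hle (Submodule.mul_le.mpr fun u hu v hv => ?_)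
  have hspan : Submodule.span R (Set.range y) ≤ N.comap (LinearMap.mulRight R v) :=
    Submodule.span_le.mpr (Set.range_subset_iff.mpr fun i => hmul i v hv)
  exact hspan hu

theorem exists_mem_degreeLE (hy : Algebra.adjoin R (Set.range y) = ⊤) (v : A) :
    ∃ n, v ∈ degreeLE R y n := by
  have hv : v ∈ Algebra.adjoin R (Set.range y) := hy ▸ Algebra.mem_top
  induction hv using Algebra.adjoin_induction with
  | mem v hv =>
    obtain ⟨i, rfl⟩ := hv
    exact ⟨1, gen_mem_degreeLE_one i⟩
  | algebraMap r => exact ⟨0, mem_degreeLE_zero.mpr ⟨r, (Algebra.algebraMap_eq_smul_one r).symm⟩⟩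
  | add u v _ _ hu hv =>
    obtain ⟨m, hu⟩ := hu
    obtain ⟨n, hv⟩ := hv
    exact ⟨max m n, add_mem (degreeLE_mono (le_max_left m n) hu)
      (degreeLE_mono (le_max_right m n) hv)⟩
  | mul u v _ _ hu hv =>
    obtain ⟨m, hu⟩ := hu
    obtain ⟨n, hv⟩ := hv
    exact ⟨m + n, mul_mem_degreeLE_add hu hv⟩

end Filtration

section Operators

theorem lie_mul {A : Type*} [Ring A] (a b c : A) : ⁅a, b * c⁆ = ⁅a, b⁆ * c + b * ⁅a, c⁆ := by
  simp only [Ring.lie_def]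
  noncomm_ring

variable (R : Type*) {A : Type*} [CommRing R] [Ring A] [Algebra R A]

/-- The operator `v ↦ ∑ j, y j * [y j, v]`. When `∑ j, y j * y j` is central, it is one half of the
Laplacian `∑ j, (ad (y j))²`. -/
def halfLaplacian {ι : Type*} [Fintype ι] (y : ι → A) : A →ₗ[R] A :=
  ∑ j, LinearMap.mulLeft R (y j) ∘ₗ LieAlgebra.ad R A (y j)

/-- The `k`-th component of the cross product `y × [y, v]`, as an operator in `v`. The components
are indexed modulo 3, so that `k`, `k + 1`, `k + 2` are in cyclic order. -/
def crossAd (y : Fin 3 → A) (k : Fin 3) : A →ₗ[R] A :=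
  LinearMap.mulLeft R (y (k + 1)) ∘ₗ LieAlgebra.ad R A (y (k + 2))
    - LinearMap.mulLeft R (y (k + 2)) ∘ₗ LieAlgebra.ad R A (y (k + 1))

/-- The left-hand side of the `i`-th field equation
`y i * ∑ j, y j * [y j, v] + μ ([y, v] × y) i = c i • 1`, as an operator in `v`. -/
def fieldOp (μ : R) (y : Fin 3 → A) (i : Fin 3) : A →ₗ[R] A :=
  LinearMap.mulLeft R (y i) ∘ₗ halfLaplacian R y
    + μ • (LinearMap.mulRight R (y (i + 2)) ∘ₗ LieAlgebra.ad R A (y (i + 1))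
      - LinearMap.mulRight R (y (i + 1)) ∘ₗ LieAlgebra.ad R A (y (i + 2)))

variable {R}

theorem halfLaplacian_apply {ι : Type*} [Fintype ι] (y : ι → A) (v : A) :
    halfLaplacian R y v = ∑ j, y j * ⁅y j, v⁆ := by
  simp [halfLaplacian]

theorem crossAd_apply (y : Fin 3 → A) (k : Fin 3) (v : A) :
    crossAd R y k v = y (k + 1) * ⁅y (k + 2), v⁆ - y (k + 2) * ⁅y (k + 1), v⁆ := rfl

theorem fieldOp_apply (μ : R) (y : Fin 3 → A) (i : Fin 3) (v : A) :
    fieldOp R μ y i v = y i * halfLaplacian R y v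
      + μ • (⁅y (i + 1), v⁆ * y (i + 2) - ⁅y (i + 2), v⁆ * y (i + 1)) := rfl

theorem fieldOp_one (μ : R) (y : Fin 3 → A) (i : Fin 3) : fieldOp R μ y i 1 = 0 := by
  simp [fieldOp_apply, halfLaplacian_apply, Ring.lie_def]

theorem halfLaplacian_mul {ι : Type*} [Fintype ι] (y : ι → A) (a b : A) :
    halfLaplacian R y (a * b)
      = halfLaplacian R y a * b + ∑ j, ⁅y j, a⁆ * ⁅y j, b⁆ + a * halfLaplacian R y b := by
  simp only [halfLaplacian_apply, Finset.sum_mul, Finset.mul_sum, ← Finset.sum_add_distrib]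
  refine Finset.sum_congr rfl fun j _ => ?_
  simp only [Ring.lie_def]
  noncomm_ring

theorem crossAd_mul (y : Fin 3 → A) (k : Fin 3) (a b : A) :
    crossAd R y k (a * b) = crossAd R y k a * b
      + (⁅y (k + 1), a⁆ * ⁅y (k + 2), b⁆ - ⁅y (k + 2), a⁆ * ⁅y (k + 1), b⁆)
      + a * crossAd R y k b := by
  simp only [crossAd_apply, Ring.lie_def]
  noncomm_ring

end Operators

theorem sum_univ_fin_three_rotate {M : Type*} [AddCommMonoid M] (f : Fin 3 → M) (i : Fin 3) :
    ∑ j, f j = f i + f (i + 1) + f (i + 2) := by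
  rw [← Equiv.sum_comp (Equiv.addLeft i) f, Fin.sum_univ_three]
  simp

theorem eq_or_eq_add_one_or_eq_add_two (i j : Fin 3) : j = i ∨ j = i + 1 ∨ j = i + 2 := by
  decide +revert

/-- A triple satisfying the relations of a fuzzy sphere: the structure constant is `μ`, the squared
radius is `s`, and indices are read modulo 3, so that `lie` lists the three brackets of consecutive
generators. -/
structure IsSphericalTriple {R A : Type*} [CommRing R] [Ring A] [Algebra R A] (μ s : R)
    (y : Fin 3 → A) : Prop where
  lie : ∀ i, ⁅y i, y (i + 1)⁆ = μ • y (i + 2)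
  sum_mul_self : ∑ i, y i * y i = s • (1 : A)

namespace IsSphericalTriple

section CommRing

variable {R A : Type*} [CommRing R] [Ring A] [Algebra R A] {μ s : R} {y : Fin 3 → A} {n : ℕ}
  {v : A}

theorem lie_add_two (h : IsSphericalTriple μ s y) (i : Fin 3) :
    ⁅y i, y (i + 2)⁆ = -(μ • y (i + 1)) := by
  have hcyc := h.lie (i + 2)
  rw [add_assoc, add_assoc, show (2 + 1 : Fin 3) = 0 from rfl, show (2 + 2 : Fin 3) = 1 from rfl,
    add_zero] at hcyc
  rw [← lie_skew, hcyc]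

theorem lie_add_one_add_two (h : IsSphericalTriple μ s y) (i : Fin 3) :
    ⁅y (i + 1), y (i + 2)⁆ = μ • y i := by
  have hcyc := h.lie (i + 1)
  rwa [add_assoc, add_assoc, show (1 + 1 : Fin 3) = 2 from rfl, show (1 + 2 : Fin 3) = 0 from rfl,
    add_zero] at hcyc

theorem lie_gen_mem_degreeLE_one (h : IsSphericalTriple μ s y) (i j : Fin 3) :
    ⁅y i, y j⁆ ∈ degreeLE R y 1 := by
  rcases eq_or_eq_add_one_or_eq_add_two i j with rfl | rfl | rfl
  · simp
  · exact h.lie i ▸ Submodule.smul_mem _ μ (gen_mem_degreeLE_one _)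
  · exact h.lie_add_two i ▸ neg_mem (Submodule.smul_mem _ μ (gen_mem_degreeLE_one _))

theorem lie_mem_degreeLE (h : IsSphericalTriple μ s y) (i : Fin 3) (hv : v ∈ degreeLE R y n) :
    ⁅y i, v⁆ ∈ degreeLE R y n := by
  suffices degreeLE R y n ≤ (degreeLE R y n).comap (LieAlgebra.ad R A (y i)) from this hv
  clear hv
  induction n with
  | zero =>
    intro v hv
    obtain ⟨r, rfl⟩ := mem_degreeLE_zero.mp hv
    simp [Ring.lie_def]
  | succ n ih =>
    refine degreeLE_succ_le (fun v hv => degreeLE_mono n.le_succ (ih hv)) fun j v hv => ?_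
    rw [Submodule.mem_comap, LieAlgebra.ad_apply, lie_mul]
    exact add_mem (mul_mem_degreeLE_succ (h.lie_gen_mem_degreeLE_one i j) hv)
      (mul_mem_degreeLE_succ (gen_mem_degreeLE_one j) (ih hv))

theorem crossAd_gen (h : IsSphericalTriple μ s y) (k j : Fin 3) :
    crossAd R y k (y j) = (if k = j then μ * s else 0) • (1 : A) - μ • (y j * y k) := by
  have h₁ := h.lie k
  have h₂ := h.lie_add_two k
  have h₃ := h.lie_add_one_add_two k
  have hs := h.sum_mul_self
  rw [sum_univ_fin_three_rotate _ k] at hs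
  rw [crossAd_apply]
  rcases eq_or_eq_add_one_or_eq_add_two k j with rfl | rfl | rfl
  · rw [if_pos rfl, mul_smul, ← hs, ← lie_skew, h₂, ← lie_skew (y (j + 1)), h₁, neg_neg,
      mul_neg, mul_smul_comm, mul_smul_comm]
    module
  · rw [if_neg (by simp), lie_self, mul_zero, ← lie_skew, h₃, mul_neg, mul_smul_comm]
    module
  · rw [if_neg (by simp), lie_self, mul_zero, h₃, mul_smul_comm]
    module

theorem halfLaplacian_gen (h : IsSphericalTriple μ s y) (k : Fin 3) :
    halfLaplacian R y (y k) = -(μ ^ 2) • y k := by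
  have h₃ := h.lie_add_one_add_two k
  rw [halfLaplacian_apply, sum_univ_fin_three_rotate _ k, lie_self, ← lie_skew (y (k + 1)), h.lie,
    ← lie_skew (y (k + 2)), h.lie_add_two]
  rw [Ring.lie_def] at h₃
  rw [mul_zero, mul_neg, neg_neg, mul_smul_comm, mul_smul_comm, pow_two, neg_smul, mul_smul, ← h₃]
  module

theorem sum_lie_gen_mul_lie (h : IsSphericalTriple μ s y) (k : Fin 3) (v : A) :
    ∑ j, ⁅y j, y k⁆ * ⁅y j, v⁆ = μ • crossAd R y k v := by
  rw [sum_univ_fin_three_rotate _ k, lie_self, ← lie_skew (y (k + 1)), h.lie,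
    ← lie_skew (y (k + 2)), h.lie_add_two, crossAd_apply]
  simp only [neg_neg, zero_mul, neg_mul, smul_mul_assoc]
  module

theorem crossAd_add_smul_mem (h : IsSphericalTriple μ s y) (k : Fin 3)
    (hv : v ∈ degreeLE R y n) : crossAd R y k v + (n * μ) • (y k * v) ∈ degreeLE R y n := by
  suffices degreeLE R y n ≤
      (degreeLE R y n).comap (crossAd R y k + (n * μ) • LinearMap.mulLeft R (y k)) from this hv
  clear hv
  induction n with
  | zero =>
    intro v hv
    obtain ⟨r, rfl⟩ := mem_degreeLE_zero.mp hv
    simp [crossAd_apply, Ring.lie_def]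
  | succ n ih =>
    refine degreeLE_succ_le (fun v hv => ?_) fun j v hv => ?_
    · rw [Submodule.mem_comap]
      have hyv := mul_mem_degreeLE_succ (gen_mem_degreeLE_one k) hv
      convert add_mem (degreeLE_mono n.le_succ (ih hv)) (Submodule.smul_mem _ μ hyv) using 1
      simp only [LinearMap.add_apply, LinearMap.smul_apply, LinearMap.mulLeft_apply]
      push_cast
      module
    · rw [Submodule.mem_comap]
      have hlie := mul_mem_degreeLE_succ (h.lie_gen_mem_degreeLE_one k j) hv
      have hlie₁ := mul_mem_degreeLE_succ (h.lie_gen_mem_degreeLE_one (k + 1) j)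
        (h.lie_mem_degreeLE (k + 2) hv)
      have hlie₂ := mul_mem_degreeLE_succ (h.lie_gen_mem_degreeLE_one (k + 2) j)
        (h.lie_mem_degreeLE (k + 1) hv)
      have hrec := mul_mem_degreeLE_succ (gen_mem_degreeLE_one j) (ih hv)
      have hv' := degreeLE_mono n.le_succ hv
      convert add_mem (add_mem (add_mem (Submodule.smul_mem _ (if k = j then μ * s else 0) hv')
        (Submodule.smul_mem _ ((n + 1) * μ) hlie)) (sub_mem hlie₁ hlie₂)) hrec using 1
      simp only [LinearMap.add_apply, LinearMap.smul_apply, LinearMap.mulLeft_apply, crossAd_mul,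
        h.crossAd_gen, Ring.lie_def (y k), mul_add, sub_mul, smul_mul_assoc, mul_smul_comm,
        one_mul, mul_assoc]
      push_cast
      module

theorem halfLaplacian_gen_mul (h : IsSphericalTriple μ s y) (k : Fin 3) (v : A) :
    halfLaplacian R y (y k * v)
      = y k * halfLaplacian R y v - μ ^ 2 • (y k * v) + μ • crossAd R y k v := by
  rw [halfLaplacian_mul, h.halfLaplacian_gen, h.sum_lie_gen_mul_lie, smul_mul_assoc]
  module

theorem halfLaplacian_add_smul_mem (h : IsSphericalTriple μ s y)
    (hv : v ∈ degreeLE R y (n + 1)) :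
    halfLaplacian R y v + ((n + 2).choose 2 * μ ^ 2) • v ∈ degreeLE R y n := by
  suffices degreeLE R y (n + 1) ≤ (degreeLE R y n).comap
      (halfLaplacian R y + ((n + 2).choose 2 * μ ^ 2) • LinearMap.id) from this hv
  clear hv
  induction n with
  | zero =>
    refine degreeLE_succ_le (fun v hv => ?_) fun k v hv => ?_ <;>
      obtain ⟨r, rfl⟩ := mem_degreeLE_zero.mp hv
    · simpa [halfLaplacian_apply, Ring.lie_def] using
        Submodule.smul_mem _ r (Submodule.smul_mem _ (μ ^ 2) one_mem_degreeLE)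
    · simp [h.halfLaplacian_gen]
  | succ n ih =>
    have hchoose : (n + 1 + 2).choose 2 = (n + 2) + (n + 2).choose 2 := by
      rw [Nat.choose_succ_succ' (n + 2) 1, Nat.choose_one_right]
    refine degreeLE_succ_le (fun v hv => ?_) fun k v hv => ?_
    · rw [Submodule.mem_comap]
      convert add_mem (degreeLE_mono n.le_succ (ih hv))
        (Submodule.smul_mem _ ((n + 2) * μ ^ 2) hv) using 1
      simp only [LinearMap.add_apply, LinearMap.smul_apply, LinearMap.id_apply, hchoose]
      push_cast
      module
    · rw [Submodule.mem_comap]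
      have hrec := mul_mem_degreeLE_succ (gen_mem_degreeLE_one k) (ih hv)
      convert add_mem hrec (Submodule.smul_mem _ μ (h.crossAd_add_smul_mem k hv)) using 1
      simp only [LinearMap.add_apply, LinearMap.smul_apply, LinearMap.id_apply, hchoose,
        h.halfLaplacian_gen_mul, mul_add, mul_smul_comm]
      push_cast
      module

theorem sum_gen_mul_cross_eq_zero (h : IsSphericalTriple μ s y) (v : A) :
    ∑ i, y i * (⁅y (i + 1), v⁆ * y (i + 2) - ⁅y (i + 2), v⁆ * y (i + 1)) = 0 := by
  calc
    _ = ∑ i, ⁅y i, y (i + 1)⁆ * v * y (i + 2) - ∑ i, y i * v * ⁅y (i + 1), y (i + 2)⁆ := by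
      simp only [Fin.sum_univ_three, Ring.lie_def, Fin.reduceAdd, zero_add]
      noncomm_ring
    _ = μ • (∑ i, y (i + 2) * v * y (i + 2) - ∑ i, y i * v * y i) := by
      simp only [h.lie, h.lie_add_one_add_two, smul_mul_assoc, mul_smul_comm, Finset.smul_sum,
        smul_sub]
    _ = 0 := by
      have hshift : ∑ i, y (i + 2) * v * y (i + 2) = ∑ i, y i * v * y i :=
        Equiv.sum_comp (Equiv.addRight (2 : Fin 3)) fun i => y i * v * y i
      rw [hshift, sub_self, smul_zero]

theorem lie_gen_cross (h : IsSphericalTriple μ s y) (i j : Fin 3) :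
    ⁅y (i + 1), y j⁆ * y (i + 2) - ⁅y (i + 2), y j⁆ * y (i + 1)
      = μ • (y i * y j) - (if i = j then μ * s else 0) • (1 : A) := by
  have h₁ := h.lie i
  have h₂ := h.lie_add_two i
  have h₃ := h.lie_add_one_add_two i
  have hs := h.sum_mul_self
  rw [sum_univ_fin_three_rotate _ i] at hs
  rcases eq_or_eq_add_one_or_eq_add_two i j with rfl | rfl | rfl
  · rw [if_pos rfl, mul_smul, ← hs, ← lie_skew, h₁, ← lie_skew (y (j + 2)), h₂, neg_neg,
      neg_mul, smul_mul_assoc, smul_mul_assoc]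
    module
  · rw [if_neg (by simp), lie_self, zero_mul, ← lie_skew, h₃, neg_mul, smul_mul_assoc]
    module
  · rw [if_neg (by simp), lie_self, zero_mul, h₃, smul_mul_assoc]
    module

theorem sum_gen_mul_fieldOp (h : IsSphericalTriple μ s y) (v : A) :
    ∑ i, y i * fieldOp R μ y i v = s • halfLaplacian R y v := by
  simp only [fieldOp_apply, mul_add, mul_smul_comm, Finset.sum_add_distrib, ← Finset.smul_sum,
    h.sum_gen_mul_cross_eq_zero, ← mul_assoc, ← Finset.sum_mul, h.sum_mul_self]
  rw [smul_mul_assoc, one_mul, smul_zero, add_zero]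

theorem fieldOp_gen (h : IsSphericalTriple μ s y) (i j : Fin 3) :
    fieldOp R μ y i (y j) = if i = j then (-μ ^ 2 * s) • (1 : A) else 0 := by
  rw [fieldOp_apply, h.halfLaplacian_gen, h.lie_gen_cross, mul_smul_comm]
  split_ifs <;> module

end CommRing

section Field

variable {F A : Type*} [Field F] [Ring A] [Algebra F A] {μ s : F} {y : Fin 3 → A}

theorem halfLaplacian_sub_sum_eq_zero (h : IsSphericalTriple μ s y) (hμ : μ ≠ 0) (hs : s ≠ 0)
    {c : Fin 3 → F} {v : A} (hv : ∀ i, fieldOp F μ y i v = c i • (1 : A)) :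
    halfLaplacian F y (v - ∑ i, (c i / (-μ ^ 2 * s)) • y i) = 0 := by
  have hsmul : s • halfLaplacian F y v = ∑ i, c i • y i := by
    simp only [← h.sum_gen_mul_fieldOp, hv, mul_smul_comm, mul_one]
  have hlap : halfLaplacian F y v = s⁻¹ • ∑ i, c i • y i := by
    rw [← hsmul, inv_smul_smul₀ hs]
  rw [map_sub, hlap, map_sum, Finset.smul_sum, sub_eq_zero]
  refine Finset.sum_congr rfl fun i _ => ?_
  rw [map_smul, h.halfLaplacian_gen, smul_smul, smul_smul]
  congr 1
  field_simp

theorem exists_smul_one_of_halfLaplacian_eq_zero [CharZero F] (h : IsSphericalTriple μ s y)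
    (hμ : μ ≠ 0) (hy : Algebra.adjoin F (Set.range y) = ⊤) {v : A} (hv : halfLaplacian F y v = 0) :
    ∃ r : F, r • (1 : A) = v := by
  obtain ⟨n, hn⟩ := exists_mem_degreeLE hy v
  induction n with
  | zero => exact mem_degreeLE_zero.mp hn
  | succ n ih =>
    refine ih ?_
    have hchoose : ((n + 2).choose 2 : F) ≠ 0 :=
      Nat.cast_ne_zero.mpr (Nat.choose_pos (Nat.le_add_left 2 n)).ne'
    have hmem := h.halfLaplacian_add_smul_mem hn
    rw [hv, zero_add] at hmem
    exact (Submodule.smul_mem_iff _ (mul_ne_zero hchoose (pow_ne_zero 2 hμ))).mp hmem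

end Field

end IsSphericalTriple

theorem stmt5_general {F A : Type*} [Field F] [CharZero F] [Ring A] [Algebra F A] {μ s : F}
    {y : Fin 3 → A} (h : IsSphericalTriple μ s y) (hy : Algebra.adjoin F (Set.range y) = ⊤)
    (hμ : μ ≠ 0) (hs : s ≠ 0) (c : Fin 3 → F) (K : A) :
    (∀ i, y i * ∑ j, y j * ⁅y j, K⁆
        + μ • (⁅y (i + 1), K⁆ * y (i + 2) - ⁅y (i + 2), K⁆ * y (i + 1)) = c i • (1 : A))
    ↔ ∃ K₀ : F, K = K₀ • (1 : A) + ∑ i, (c i / (-μ ^ 2 * s)) • y i := by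
  have hd : -μ ^ 2 * s ≠ 0 := mul_ne_zero (neg_ne_zero.mpr (pow_ne_zero 2 hμ)) hs
  simp only [← halfLaplacian_apply (R := F), ← fieldOp_apply]
  constructor
  · intro hK
    have hlap : halfLaplacian F y (K - ∑ i, (c i / (-μ ^ 2 * s)) • y i) = 0 :=
      h.halfLaplacian_sub_sum_eq_zero hμ hs hK
    obtain ⟨K₀, hK₀⟩ := h.exists_smul_one_of_halfLaplacian_eq_zero hμ hy hlap
    exact ⟨K₀, sub_eq_iff_eq_add.mp hK₀.symm⟩
  · rintro ⟨K₀, rfl⟩ i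
    simp only [map_add, map_sum, map_smul, fieldOp_one, h.fieldOp_gen, smul_zero, zero_add,
      smul_ite, smul_smul, div_mul_cancel₀ _ hd, Finset.sum_ite_eq, Finset.mem_univ, if_true]

end

theorem sum_epsC_smul {M : Type*} [AddCommGroup M] [Module ℂ M] (f : Fin 3 → Fin 3 → M)
    (i : Fin 3) :
    ∑ j, ∑ m, epsC i j m • f j m = f (i + 1) (i + 2) - f (i + 2) (i + 1) := by
  fin_cases i <;> norm_num [Fin.sum_univ_three, epsC]
  · exact (sub_eq_add_neg _ _).symm
  · exact neg_add_eq_sub _ _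
  · exact (sub_eq_add_neg _ _).symm

theorem isSphericalTriple_yGen (lam : ℂ) :
    IsSphericalTriple (2 * Complex.I * lam) (1 - lam ^ 2) (yGen lam) where
  lie i := by
    have hrel := RingQuot.mkAlgHom_rel ℂ (FuzzyRel.comm (lam := lam) i (i + 1))
    simp only [map_sub, map_mul, map_sum, map_smul] at hrel
    rw [Ring.lie_def]
    refine hrel.trans ?_
    fin_cases i <;> simp [Fin.sum_univ_three, epsC, yGen]
  sum_mul_self := by
    simpa only [map_sum, map_mul, map_smul, map_one, yGen] using
      RingQuot.mkAlgHom_rel ℂ (FuzzyRel.sphere (lam := lam))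

theorem adjoin_range_yGen (lam : ℂ) : Algebra.adjoin ℂ (Set.range (yGen lam)) = ⊤ := by
  have hmap := congrArg (Subalgebra.map (RingQuot.mkAlgHom ℂ (FuzzyRel lam)))
    (FreeAlgebra.adjoin_range_ι ℂ (Fin 3))
  rwa [AlgHom.map_adjoin, ← Set.range_comp, Algebra.map_top,
    (AlgHom.range_eq_top _).mpr (RingQuot.mkAlgHom_surjective ℂ _)] at hmap

/-- For `λ ≠ 0`, `λ² ≠ 1` and `c₁, c₂, c₃ ∈ ℂ`, an element `K ∈ ℂ_λ[S²]` satisfies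
`∑_j y^i y^j [y^j, K] + 2iλ ∑_{j,m} ε_{ijm} [y^j, K] y^m = c_i · 1` for `i = 1,2,3`
iff `K = K₀·1 + ∑_i (c_i / (4λ²(1−λ²))) y^i` for some `K₀ ∈ ℂ`. -/
theorem stmt5 (lam : ℂ) (hlam : lam ≠ 0) (hlam2 : lam ^ 2 ≠ 1)
    (c : Fin 3 → ℂ) (K : FuzzySphere lam) :
    (∀ i, ∑ j, yGen lam i * (yGen lam j * (yGen lam j * K - K * yGen lam j))
        + (2 * Complex.I * lam) •
            ∑ j, ∑ m, epsC i j m • ((yGen lam j * K - K * yGen lam j) * yGen lam m)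
      = c i • (1 : FuzzySphere lam))
    ↔ ∃ K₀ : ℂ, K = K₀ • (1 : FuzzySphere lam)
        + ∑ i, (c i / (4 * lam ^ 2 * (1 - lam ^ 2))) • yGen lam i := by
  have hs : 1 - lam ^ 2 ≠ 0 := sub_ne_zero.mpr hlam2.symm
  have hd : -(2 * Complex.I * lam) ^ 2 * (1 - lam ^ 2) = 4 * lam ^ 2 * (1 - lam ^ 2) := by
    linear_combination (-4 * lam ^ 2 * (1 - lam ^ 2)) * Complex.I_sq
  have hgen := stmt5_general (isSphericalTriple_yGen lam) (adjoin_range_yGen lam)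
    (by simp [hlam]) hs c K
  have hcross := sum_epsC_smul fun j m => ⁅yGen lam j, K⁆ * yGen lam m
  rw [hd] at hgen
  simpa only [hcross, ← Finset.mul_sum, ← Ring.lie_def] using hgen
end
end

section
/- Let U ⊆ ℝⁿ be open. Let g_{μν}, h_{ij}, A_{iμ} : U → ℝ be smooth with g, h symmetric and pointwise invertible (inverses g^{μν}, h^{ij}), and suppose g̃_{μν} := g_{μν} − h^{ij} A_{iμ} A_{jν} is pointwise invertible with smooth inverse g̃^{μν}. Set h̃^{ij} := h^{ij} + h^{ik} h^{lj} g̃^{μν} A_{kν} A_{lμ}, Ã^{αi} := −g̃^{αν} h^{ij} A_{jν}, and let Γ̃^σ_{μν} := (1/2) g̃^{σρ}(∂_μ g̃_{νρ} + ∂_ν g̃_{μρ} − ∂_ρ g̃_{μν}). Define the quantum Levi-Civita coefficients: E^k_{αβ} = −(1/2) h^{ki}(∂_α A_{iβ} + ∂_β A_{iα} − 2 A_{iμ} Γ^μ_{αβ}); F^μ_{αi} = (1/2) g̃^{βμ}( −(∂_α A_{iβ} − ∂_β A_{iα}) + h^{jk} A_{kβ}(∂_α h_{ij} − A_{lα}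 ε_{ijl}) ); B^k_{αi} = (1/2) h̃^{jk}( g^{μβ} A_{jμ}(∂_α A_{iβ} − ∂_β A_{iα}) + A_{lα} ε_{ijl} − ∂_α h_{ij} ); D^μ_{ij} = (1/2) g̃^{μα}( ∂_α h_{ij} − A_{kα} h^{mk}(h_{ni} ε_{jmn} + h_{nj} ε_{imn}) ); H^l_{ik} = (1/2) h̃^{jl}( h_{ni} ε_{kjn} + h_{nk} ε_{ijn} − A_{jμ} g^{μα} ∂_α h_{ik} ) − (1/2) ε_{lik}; Γ^σ_{μν} = Γ̃^σ_{μν} + (1/2) g̃^{σρ}( A_{μi}(∂_ν(h^{ij} A_{ρj}) − ∂_ρ(h^{ij} A_{νj})) + A_{νi}(∂_μ(h^{ij} A_{ρj}) − ∂_ρ(h^{ij} A_{μj})) + A_{iμ} A_{jν} ∂_ρ h^{ij} ). Let V be a complex vector space, P₁, P₂, P₃ ∈ End(V), and f : U → V smooth. Then: g̃^{αβ} ∂_α ∂_β f + h̃^{ij} P_i P_j f + 2 Ã^{αi} ∂_α (P_i f) + ( E^i_{αβ} g̃^{αβ} + 2 B^i_{αj} Ã^{αj} + H^i_{jk} h̃^{jk}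 ) P_i f + ( −Γ^μ_{αβ} g̃^{αβ} + 2 F^μ_{αj} Ã^{αj} + D^μ_{jk} h̃^{jk} ) ∂_μ f = g̃^{αβ} ( (∂_α − h^{ik} A_{kα} P_i)(∂_β − h^{jl} A_{lβ} P_j) f − Γ̃^μ_{αβ} (∂_μ − h^{ik} A_{kμ} P_i) f ) + h^{ij} P_i P_j f + (1/2) g̃^{αβ} ( h^{ij} ∂_α h_{ij} ) ( ∂_β f − h^{kl} A_{lβ} P_k f ). -/
noncomputable section

/-- The totally antisymmetric Levi-Civita symbol on three indices with ε₀₁₂ = 1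
(indices written 1,2,3 in the paper). -/
def eps (i j k : Fin 3) : ℝ :=
  ((((i : ℤ) - (j : ℤ)) * ((j : ℤ) - (k : ℤ)) * ((k : ℤ) - (i : ℤ))) / 2 : ℤ)

/-- The partial derivative `∂_μ f` of a function on `ℝⁿ`. -/
def pd {n : ℕ} {W : Type*} [NormedAddCommGroup W] [NormedSpace ℝ W]
    (μ : Fin n) (f : (Fin n → ℝ) → W) : (Fin n → ℝ) → W :=
  fun x => fderiv ℝ f x (Pi.single μ 1)

/-!
Write `q^i_μ = h^{ij} A_{jμ}`, so that the horizontal derivatives are `∂_μ - q^i_μ P_i`. Up to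
terms that cancel on contraction with the inverse metric `(g̃^{αβ}, Ã^{αi}, h̃^{ij})`, the fibre
components `E, B, H` of the connection are `q` times the spacetime components `Γ, -F, -D` plus
explicit terms in the derivatives of `h` and `A`. After contraction, the coefficient of `P_i f` is
therefore `-g̃^{αβ} ∂_α q^i_β` minus `q` times the coefficient of `∂_μ f`, that is, the first-order
terms form a horizontal derivative apart from `-g̃^{αβ} (∂_α q^i_β) P_i f`. The coefficient of
`∂_μ f` itself is `-g̃^{αβ} Γ̃^μ_{αβ} + ½ g̃^{μα} h^{ij} ∂_α h_{ij}`, since field strengths and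
structure constants cancel. The second-order terms complete the square
`g̃^{αβ} (∂_α - q^i_α P_i)(∂_β - q^j_β P_j) + h^{ij} P_i P_j`, whose expansion produces exactly the
remaining `-g̃^{αβ} (∂_α q^i_β) P_i f`.
-/

open scoped Matrix Topology

section Contraction

variable {κ κ' κ'' W : Type*} [Fintype κ] [Fintype κ'] [Fintype κ'']
  [AddCommGroup W] [Module ℝ W]

/-- The full contraction `G^{ab} T_{ab}` of a tensor `T`, with values in a real vector space,
against a matrix `G`; the two index types may differ, as they do for `Ã^{αi}`. -/
def contract (G : Matrix κ κ' ℝ) (T : κ → κ' → W) : W :=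
  ∑ a, ∑ b, G a b • T a b

lemma contract_add (G : Matrix κ κ' ℝ) (S T : κ → κ' → W) :
    contract G (fun a b => S a b + T a b) = contract G S + contract G T := by
  simp only [contract, smul_add, Finset.sum_add_distrib]

lemma contract_sub (G : Matrix κ κ' ℝ) (S T : κ → κ' → W) :
    contract G (fun a b => S a b - T a b) = contract G S - contract G T := by
  simp only [contract, smul_sub, Finset.sum_sub_distrib]

lemma contract_add_left (G G' : Matrix κ κ' ℝ) (T : κ → κ' → W) :
    contract (G + G') T = contract G T + contract G' T := by
  simp only [contract, Matrix.add_apply, add_smul, Finset.sum_add_distrib]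

lemma contract_neg_left (G : Matrix κ κ' ℝ) (T : κ → κ' → W) :
    contract (-G) T = -contract G T := by
  simp only [contract, Matrix.neg_apply, neg_smul, Finset.sum_neg_distrib]

lemma contract_sub_left (G G' : Matrix κ κ' ℝ) (T : κ → κ' → W) :
    contract (G - G') T = contract G T - contract G' T := by
  rw [sub_eq_add_neg, contract_add_left, contract_neg_left, sub_eq_add_neg]

lemma contract_smul (G : Matrix κ κ' ℝ) (r : ℝ) (T : κ → κ' → W) :
    contract G (fun a b => r • T a b) = r • contract G T := by
  simp only [contract, Finset.smul_sum, smul_comm r]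

lemma contract_map {W' : Type*} [AddCommGroup W'] [Module ℝ W'] (G : Matrix κ κ' ℝ)
    (L : W →ₗ[ℝ] W') (T : κ → κ' → W) :
    contract G (fun a b => L (T a b)) = L (contract G T) := by
  simp only [contract, map_sum, map_smul]

lemma contract_mulVec (G : Matrix κ κ' ℝ) {ι ι' : Type*} [Fintype ι] (M : Matrix ι' ι ℝ)
    (T : κ → κ' → ι → ℝ) : contract G (fun a b => M *ᵥ T a b) = M *ᵥ contract G T :=
  contract_map G M.mulVecLin T

lemma contract_vecMul (G : Matrix κ κ' ℝ) {ι ι' : Type*} [Fintype ι] (M : Matrix ι ι' ℝ)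
    (T : κ → κ' → ι → ℝ) : contract G (fun a b => T a b ᵥ* M) = contract G T ᵥ* M :=
  contract_map G M.vecMulLinear T

lemma contract_apply {ι : Type*} (G : Matrix κ κ' ℝ) (T : κ → κ' → ι → ℝ) (k : ι) :
    contract G T k = contract G (fun a b => T a b k) := by
  simp only [contract, Finset.sum_apply, Pi.smul_apply]

lemma contract_swap (G : Matrix κ κ' ℝ) (T : κ → κ' → W) :
    contract Gᵀ (fun b a => T a b) = contract G T :=
  Finset.sum_comm

lemma contract_mul (G : Matrix κ κ' ℝ) (B : Matrix κ' κ'' ℝ) (T : κ → κ'' → W) :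
    contract (G * B) T = contract G (fun a b => ∑ c, B b c • T a c) := by
  simp only [contract, Matrix.mul_apply, Finset.sum_smul, Finset.smul_sum, mul_smul]
  exact Finset.sum_congr rfl fun a _ => Finset.sum_comm

lemma contract_mul_left (B : Matrix κ'' κ ℝ) (G : Matrix κ κ' ℝ) (T : κ'' → κ' → W) :
    contract (B * G) T = contract G (fun a b => ∑ c, B c a • T c b) := by
  rw [← contract_swap, Matrix.transpose_mul, contract_mul]
  exact contract_swap G _

lemma sum_contract_smul {ι : Type*} [Fintype ι] (G : Matrix κ κ' ℝ) (T : κ → κ' → ι → ℝ)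
    (v : ι → W) : ∑ k, contract G T k • v k = contract G (fun a b => ∑ k, T a b k • v k) :=
  (contract_map G (Fintype.linearCombination ℝ v) T).symm

lemma sum_mulVec_smul (G : Matrix κ κ' ℝ) (d : κ' → ℝ) (v : κ → W) :
    ∑ a, (G *ᵥ d) a • v a = ∑ b, d b • ∑ a, G a b • v a := by
  simp only [Matrix.mulVec, dotProduct, Finset.sum_smul, Finset.smul_sum, mul_comm (G _ _),
    mul_smul]
  exact Finset.sum_comm

lemma transpose_mul_mul_apply {ι ι' : Type*} (A : Matrix κ ι ℝ) (G : Matrix κ κ' ℝ)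
    (B : Matrix κ' ι' ℝ) (a : ι) (b : ι') :
    (Aᵀ * G * B) a b = ∑ i, ∑ j, G i j * A i a * B j b := by
  simp only [Matrix.mul_apply, Matrix.transpose_apply, Finset.sum_mul, mul_comm (A _ _)]
  exact Finset.sum_comm

end Contraction

/-- Kaluza–Klein data at one point of spacetime, to first order: the values of the spacetime metric
`g`, the fibre metric `h`, the gauge field `A`, their inverses and that of
`g̃ = g - Aᵀ h⁻¹ A`, and the first derivatives `dh α = ∂_α h` and `dA α = ∂_α A`. The fibre index
type `ι` and the structure constants `c`, which are `ε` for the fuzzy sphere, are arbitrary; the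
connection `Γt` on spacetime is indexed as `Γt α β μ = Γ̃^μ_{αβ}`. -/
structure KaluzaKleinJet (M ι : Type*) [Fintype M] [Fintype ι] [DecidableEq M]
    [DecidableEq ι] where
  (g ginv gtinv : Matrix M M ℝ)
  (h hinv : Matrix ι ι ℝ)
  A : Matrix ι M ℝ
  dh : M → Matrix ι ι ℝ
  dA : M → Matrix ι M ℝ
  Γt : M → M → M → ℝ
  c : ι → ι → ι → ℝ
  g_isSymm : g.IsSymm
  h_isSymm : h.IsSymm
  dh_isSymm : ∀ α, (dh α).IsSymm
  g_mul_ginv : g * ginv = 1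
  h_mul_hinv : h * hinv = 1
  gtinv_mul : gtinv * (g - Aᵀ * hinv * A) = 1
  c_swap₁₃ : ∀ i j k, c i j k = -c k j i
  c_swap₂₃ : ∀ i j k, c i j k = -c i k j

namespace KaluzaKleinJet

variable {M ι : Type*} [Fintype M] [Fintype ι] [DecidableEq M] [DecidableEq ι]
  (J : KaluzaKleinJet M ι)

/-- The gauge field with its fibre index raised, `q^i_μ = h^{ij} A_{jμ}`: the horizontal lift of
`∂_μ` is `∂_μ - q^i_μ P_i`. -/
def q : Matrix ι M ℝ :=
  J.hinv * J.A

/-- The derivative `∂_α h^{ij}` as forced by `h⁻¹ h = 1`. -/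
def dhinv (α : M) : Matrix ι ι ℝ :=
  -(J.hinv * J.dh α * J.hinv)

/-- The derivative `∂_α q^i_β` as forced by the product rule. -/
def dq (α : M) : Matrix ι M ℝ :=
  J.hinv * (J.dA α - J.dh α * J.q)

/-- The effective inverse fibre metric `h̃^{ij}`. -/
def ht : Matrix ι ι ℝ := fun i j =>
  J.hinv i j + ∑ k, ∑ l, ∑ μ, ∑ ν, J.hinv i k * J.hinv l j * J.gtinv μ ν * J.A k ν * J.A l μ

/-- The mixed component `Ã^{αi}` of the inverse metric. -/
def At : Matrix M ι ℝ := fun α i =>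
  -∑ ν, ∑ j, J.gtinv α ν * J.hinv i j * J.A j ν

section Metric

lemma hinv_transpose : J.hinvᵀ = J.hinv := by
  rw [← Matrix.inv_eq_right_inv J.h_mul_hinv]
  exact J.h_isSymm.inv

lemma gtinv_transpose : J.gtinvᵀ = J.gtinv := by
  rw [← Matrix.inv_eq_left_inv J.gtinv_mul]
  refine Matrix.IsSymm.inv (J.g_isSymm.sub ?_)
  rw [Matrix.IsSymm, Matrix.transpose_mul, Matrix.transpose_mul, Matrix.transpose_transpose,
    hinv_transpose, Matrix.mul_assoc]

lemma h_mul_q : J.h * J.q = J.A := by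
  rw [q, ← Matrix.mul_assoc, J.h_mul_hinv, Matrix.one_mul]

lemma q_transpose : J.qᵀ = J.Aᵀ * J.hinv := by
  rw [q, Matrix.transpose_mul, hinv_transpose]

lemma At_eq : J.At = -(J.gtinv * J.qᵀ) := by
  ext α i
  simp only [At, q, Matrix.neg_apply, Matrix.mul_apply, Matrix.transpose_apply, Finset.mul_sum,
    mul_assoc]

lemma ht_eq : J.ht = J.hinv + J.q * (J.gtinv * J.qᵀ) := by
  rw [q_transpose, ← J.gtinv_transpose, q, Matrix.mul_assoc]
  ext i j
  simp only [ht, Matrix.add_apply, Matrix.mul_apply, Matrix.transpose_apply, Finset.mul_sum]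
  congr 1
  refine Finset.sum_congr rfl fun k _ => ?_
  calc ∑ l, ∑ μ, ∑ ν, J.hinv i k * J.hinv l j * J.gtinv μ ν * J.A k ν * J.A l μ
      = ∑ μ, ∑ ν, ∑ l, J.hinv i k * J.hinv l j * J.gtinv μ ν * J.A k ν * J.A l μ := by
        rw [Finset.sum_comm]
        exact Finset.sum_congr rfl fun μ _ => Finset.sum_comm
    _ = ∑ ν, ∑ μ, ∑ l, J.hinv i k * (J.A k ν * (J.gtinv μ ν * (J.A l μ * J.hinv l j))) := by
        rw [Finset.sum_comm]
        exact Finset.sum_congr rfl fun ν _ => Finset.sum_congr rfl fun μ _ =>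
          Finset.sum_congr rfl fun l _ => by ring

lemma ht_transpose : J.htᵀ = J.ht := by
  simp only [ht_eq, Matrix.transpose_add, Matrix.transpose_mul, Matrix.transpose_transpose,
    hinv_transpose, gtinv_transpose, Matrix.mul_assoc]

lemma ht_mul_A : J.ht * J.A = J.q * J.gtinv * J.g := by
  have hg : J.g = (J.g - J.Aᵀ * J.hinv * J.A) + J.qᵀ * J.A := by
    rw [q_transpose, sub_add_cancel]
  rw [hg, Matrix.mul_add, Matrix.mul_assoc J.q, J.gtinv_mul, Matrix.mul_one, ht_eq,
    Matrix.add_mul, ← q]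
  simp only [Matrix.mul_assoc]

lemma ht_mul_A_mul_ginv : J.ht * J.A * J.ginv = J.q * J.gtinv := by
  rw [ht_mul_A, Matrix.mul_assoc, J.g_mul_ginv, Matrix.mul_one]

lemma h_mul_ht : J.h * J.ht = 1 - J.A * J.At := by
  rw [ht_eq, Matrix.mul_add, J.h_mul_hinv, ← Matrix.mul_assoc, h_mul_q, At_eq, Matrix.mul_neg,
    sub_neg_eq_add]

variable {W : Type*} [AddCommGroup W] [Module ℝ W]

lemma contract_gtinv_swap (T : M → M → W) :
    contract J.gtinv (fun α β => T β α) = contract J.gtinv T := by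
  conv_rhs => rw [← contract_swap, gtinv_transpose]

lemma contract_ht_swap (T : ι → ι → W) :
    contract J.ht (fun i j => T j i) = contract J.ht T := by
  conv_rhs => rw [← contract_swap, ht_transpose]

lemma contract_At (T : M → ι → W) :
    contract J.At T = -contract J.gtinv (fun α β => ∑ i, J.q i β • T α i) := by
  rw [At_eq, contract_neg_left, contract_mul]
  rfl

lemma contract_ht (T : ι → ι → W) :
    contract J.ht T = contract J.hinv T
      + contract J.gtinv (fun α β => ∑ i, J.q i α • ∑ j, J.q j β • T i j) := by
  rw [ht_eq, contract_add_left, contract_mul_left, contract_mul]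
  refine congrArg (_ + contract J.gtinv ·) (funext₂ fun α β => ?_)
  simp only [Matrix.transpose_apply, Finset.smul_sum]
  rw [Finset.sum_comm]
  exact Finset.sum_congr rfl fun i _ => Finset.sum_congr rfl fun j _ => smul_comm _ _ _

end Metric

section Coefficients

/-- The abelian field strength `∂_α A_{iβ} - ∂_β A_{iα}`, as a covector in `β`. -/
def curl (α : M) (i : ι) : M → ℝ := fun β =>
  J.dA α i β - J.dA β i α

/-- The structure constants contracted with the gauge field, `A_{lα} c_{ipl}`. -/
def twist (α : M) (i : ι) : ι → ℝ := fun p =>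
  ∑ l, J.A l α * J.c i p l

/-- The spacetime gradient `∂_ρ h_{ij}`, as a covector in `ρ`. -/
def gradh (i j : ι) : M → ℝ := fun ρ =>
  J.dh ρ i j

/-- The variation of the fibre metric under the adjoint action of the `p`-th generator; it vanishes
when `h` is invariant. -/
def killing (i j : ι) : ι → ℝ := fun p =>
  (∑ n, J.h n i * J.c j p n) + ∑ n, J.h n j * J.c i p n

/-- Twice the difference `Γ_{ρμν} - Γ̃_{ρμν}` of the spacetime connections, with the upper index
lowered by `g̃`. -/
def Γshift (μ ν : M) : M → ℝ := fun ρ =>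
  (∑ i, J.A i μ * (J.dq ν i ρ - J.dq ρ i ν)) + (∑ i, J.A i ν * (J.dq μ i ρ - J.dq ρ i μ))
    + ∑ i, ∑ j, J.A i μ * J.A j ν * J.dhinv ρ i j

/-- The connection coefficients `Γ^σ_{μν}`; as in all the coefficients below, the upper index comes
last. -/
def Γ (μ ν : M) : M → ℝ := fun σ =>
  J.Γt μ ν σ + (1 / 2) * ∑ ρ, J.gtinv σ ρ * J.Γshift μ ν ρ

/-- The connection coefficients `E^k_{αβ}`. -/
def E (α β : M) : ι → ℝ := fun k =>
  -(1 / 2) * ∑ i, J.hinv k i * (J.dA α i β + J.dA β i α - 2 * ∑ μ, J.A i μ * J.Γ α β μ)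

/-- The connection coefficients `F^μ_{αi}`. -/
def F (α : M) (i : ι) : M → ℝ := fun μ =>
  (1 / 2) * ∑ β, J.gtinv β μ *
    (-J.curl α i β + ∑ j, ∑ k, J.hinv j k * J.A k β * (J.dh α i j - J.twist α i j))

/-- The connection coefficients `B^k_{αi}`. -/
def B (α : M) (i : ι) : ι → ℝ := fun k =>
  (1 / 2) * ∑ j, J.ht j k *
    ((∑ μ, ∑ β, J.ginv μ β * J.A j μ * J.curl α i β) + J.twist α i j - J.dh α i j)

/-- The connection coefficients `D^μ_{ij}`. -/
def D (i j : ι) : M → ℝ := fun μ =>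
  (1 / 2) * ∑ α, J.gtinv μ α *
    (J.dh α i j - ∑ k, ∑ m, J.A k α * J.hinv m k * J.killing i j m)

/-- The connection coefficients `H^l_{ik}`. -/
def H (i k : ι) : ι → ℝ := fun l =>
  (1 / 2) * (∑ j, J.ht j l * (J.killing i k j
    - ∑ μ, ∑ α, J.A j μ * J.ginv μ α * J.dh α i k)) - (1 / 2) * J.c l i k

lemma Γ_eq (μ ν : M) : J.Γ μ ν = J.Γt μ ν + (1 / 2 : ℝ) • J.gtinv *ᵥ J.Γshift μ ν :=
  rfl

lemma E_eq_q_mulVec_Γ_sub (α β : M) : J.E α β = J.q *ᵥ J.Γ α β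
    - (1 / 2 : ℝ) • J.hinv *ᵥ ((J.dA α).col β + (J.dA β).col α) := by
  have h_eq : J.E α β = -(1 / 2 : ℝ) • J.hinv *ᵥ
      (((J.dA α).col β + (J.dA β).col α) - (2 : ℝ) • J.A *ᵥ J.Γ α β) := rfl
  rw [h_eq, Matrix.mulVec_sub, Matrix.mulVec_smul, Matrix.mulVec_mulVec, q]
  module

lemma F_eq (α : M) (i : ι) : J.F α i
    = (1 / 2 : ℝ) • J.gtinv *ᵥ (((J.dh α).row i - J.twist α i) ᵥ* J.q - J.curl α i) := by
  ext μ
  simp only [F, Pi.smul_apply, smul_eq_mul, Matrix.mulVec, dotProduct, Pi.sub_apply]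
  congr 1
  refine Finset.sum_congr rfl fun β _ => ?_
  have h_gtinv : J.gtinv β μ = J.gtinv μ β := congrFun₂ J.gtinv_transpose μ β
  rw [h_gtinv, neg_add_eq_sub]
  congr 2
  refine Finset.sum_congr rfl fun j _ => ?_
  rw [← Finset.sum_mul, mul_comm]
  rfl

lemma B_eq (α : M) (i : ι) : J.B α i
    = (1 / 2 : ℝ) • ((J.q * J.gtinv) *ᵥ J.curl α i - J.ht *ᵥ ((J.dh α).row i - J.twist α i)) := by
  have h_eq : J.B α i = (1 / 2 : ℝ) • J.htᵀ *ᵥ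
      ((J.A * J.ginv) *ᵥ J.curl α i - ((J.dh α).row i - J.twist α i)) := by
    ext k
    simp only [B, Pi.smul_apply, smul_eq_mul, Matrix.mulVec, dotProduct, Pi.sub_apply,
      Matrix.row_apply, sub_sub_eq_add_sub]
    refine congrArg _ (Finset.sum_congr rfl fun j _ => ?_)
    congr 3
    simp only [Matrix.mulVec, dotProduct, Matrix.mul_apply, Finset.sum_mul, mul_comm (J.ginv _ _)]
    exact Finset.sum_comm
  rw [h_eq, ht_transpose, Matrix.mulVec_sub, Matrix.mulVec_mulVec, ← Matrix.mul_assoc,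
    ht_mul_A_mul_ginv]

lemma D_eq (i j : ι) : J.D i j
    = (1 / 2 : ℝ) • J.gtinv *ᵥ (J.gradh i j - J.killing i j ᵥ* J.q) := by
  ext μ
  simp only [D, q, Pi.smul_apply, smul_eq_mul, Matrix.mulVec, Matrix.vecMul, dotProduct,
    Pi.sub_apply, Matrix.mul_apply]
  refine congrArg _ (Finset.sum_congr rfl fun α _ => ?_)
  congr 2
  rw [Finset.sum_comm]
  refine Finset.sum_congr rfl fun m _ => ?_
  rw [Finset.mul_sum]
  exact Finset.sum_congr rfl fun k _ => by ring

lemma H_eq (i j : ι) : J.H i j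
    = (1 / 2 : ℝ) • (J.ht *ᵥ J.killing i j - (J.q * J.gtinv) *ᵥ J.gradh i j)
      - (1 / 2 : ℝ) • (J.c · i j) := by
  have h_eq : J.H i j = (1 / 2 : ℝ) • J.htᵀ *ᵥ
      (J.killing i j - (J.A * J.ginv) *ᵥ J.gradh i j) - (1 / 2 : ℝ) • (J.c · i j) := by
    ext k
    simp only [H, Pi.smul_apply, smul_eq_mul, Matrix.mulVec, dotProduct, Pi.sub_apply,
      Matrix.mul_apply, Finset.sum_mul]
    congr 3
    ext j
    congr 2
    exact Finset.sum_comm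
  rw [h_eq, ht_transpose, Matrix.mulVec_sub, Matrix.mulVec_mulVec, ← Matrix.mul_assoc,
    ht_mul_A_mul_ginv]

lemma B_eq_sub_q_mulVec_F (α : M) (i : ι) : J.B α i
    = -(1 / 2 : ℝ) • J.hinv *ᵥ ((J.dh α).row i - J.twist α i) - J.q *ᵥ J.F α i := by
  rw [B_eq, F_eq, ht_eq]
  simp only [Matrix.add_mulVec, Matrix.mulVec_smul, Matrix.mulVec_sub, ← Matrix.mulVec_mulVec,
    Matrix.mulVec_transpose, Matrix.sub_vecMul]
  module

lemma H_eq_sub_q_mulVec_D (i j : ι) : J.H i j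
    = (1 / 2 : ℝ) • J.hinv *ᵥ J.killing i j - J.q *ᵥ J.D i j - (1 / 2 : ℝ) • (J.c · i j) := by
  rw [H_eq, D_eq, ht_eq]
  simp only [Matrix.add_mulVec, Matrix.mulVec_smul, Matrix.mulVec_sub, ← Matrix.mulVec_mulVec,
    Matrix.mulVec_transpose]
  module

end Coefficients

section FirstOrder

lemma contract_ht_c : contract J.ht (fun i j => (J.c · i j)) = 0 := by
  ext l
  have h_neg : contract J.ht (J.c l) = -contract J.ht (J.c l) := by
    rw [← neg_one_smul ℝ, ← contract_smul, ← contract_ht_swap]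
    simp only [neg_one_smul, ← J.c_swap₂₃]
  rw [contract_apply, Pi.zero_apply]
  linarith

lemma contract_ht_killing :
    contract J.ht J.killing = -(2 : ℝ) • contract J.At J.twist := by
  ext p
  have h_diag : ∀ n, J.c n p n = 0 := fun n => by linarith [J.c_swap₁₃ n p n]
  have h_off : contract 1 (fun n j => J.c j p n) = 0 := by
    simp [contract, Matrix.one_apply, h_diag]
  have h_half : contract J.ht (fun i j => ∑ n, J.h n i * J.c j p n)
      = -contract J.At (fun α j => J.twist α j p) := by
    calc contract J.ht (fun i j => ∑ n, J.h n i * J.c j p n)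
        = contract (J.h * J.ht) (fun n j => J.c j p n) := (contract_mul_left _ _ _).symm
      _ = -contract (J.A * J.At) (fun n j => J.c j p n) := by
          rw [h_mul_ht, contract_sub_left, h_off, zero_sub]
      _ = -contract J.At (fun α j => J.twist α j p) := by
          rw [contract_mul_left]
          rfl
  have h_swap := J.contract_ht_swap fun i j => ∑ n, J.h n i * J.c j p n
  simp only [contract_apply, killing, Pi.smul_apply, smul_eq_mul]
  rw [contract_add, h_swap, h_half]
  ring

lemma Γshift_eq (μ ν : M) : J.Γshift μ ν
    = (∑ j, J.q j μ • (J.curl ν j - (J.dh ν).row j ᵥ* J.q))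
      + (∑ j, J.q j ν • (J.curl μ j - (J.dh μ).row j ᵥ* J.q))
      + ∑ j, J.q j μ • ∑ k, J.q k ν • J.gradh j k := by
  ext ρ
  have h_dq : ∀ α β γ, ∑ i, J.A i α * J.dq β i γ
      = ∑ j, J.q j α * (J.dA β j γ - (J.dh β * J.q) j γ) := fun α β γ =>
    congrFun₂ (show J.Aᵀ * J.dq β = J.qᵀ * (J.dA β - J.dh β * J.q) by
      rw [q_transpose, dq, Matrix.mul_assoc]) α γ
  have h_dhinv : ∑ i, ∑ j, J.A i μ * J.A j ν * J.dhinv ρ i j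
      = -∑ j, J.q j μ * (J.dh ρ * J.q) j ν := by
    have h_conj : J.Aᵀ * (J.dhinv ρ * J.A) = -(J.qᵀ * (J.dh ρ * J.q)) := by
      rw [q_transpose, dhinv, q]
      simp only [Matrix.mul_assoc, Matrix.neg_mul, Matrix.mul_neg]
    refine Eq.trans ?_ (congrFun₂ h_conj μ ν)
    simp only [Matrix.mul_apply, Matrix.transpose_apply, Finset.mul_sum, mul_assoc,
      mul_comm (J.A _ ν)]
  have h_symm : ∑ j, J.q j ν * (J.dh ρ * J.q) j μ = ∑ j, J.q j μ * (J.dh ρ * J.q) j ν := by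
    have h_conj : (J.qᵀ * (J.dh ρ * J.q)).IsSymm := by
      rw [Matrix.IsSymm, Matrix.transpose_mul, Matrix.transpose_mul, Matrix.transpose_transpose,
        (J.dh_isSymm ρ).eq, Matrix.mul_assoc]
    exact congrFun₂ h_conj μ ν
  have h_grad : (∑ j, J.q j μ • ∑ k, J.q k ν • J.gradh j k) ρ
      = ∑ j, J.q j μ * (J.dh ρ * J.q) j ν := by
    simp only [Finset.sum_apply, Pi.smul_apply, smul_eq_mul, Matrix.mul_apply, gradh,
      mul_comm (J.q _ ν)]
  have h_vecMul : ∀ α j, ((J.dh α).row j ᵥ* J.q) ρ = (J.dh α * J.q) j ρ := fun α j => rfl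
  rw [Pi.add_apply, h_grad]
  simp only [Γshift, Pi.add_apply, Finset.sum_apply, Pi.smul_apply, Pi.sub_apply, smul_eq_mul,
    h_vecMul, curl, mul_sub, Finset.sum_sub_distrib, h_dq, h_dhinv, h_symm]
  ring

lemma contract_Γshift : contract J.gtinv J.Γshift
    = (2 : ℝ) • contract J.At (fun α i => (J.dh α).row i ᵥ* J.q - J.curl α i)
      + (contract J.ht J.gradh - contract J.hinv J.gradh) := by
  have h_swap : contract J.gtinv (fun μ ν => ∑ j, J.q j μ • (J.curl ν j - (J.dh ν).row j ᵥ* J.q))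
      = contract J.gtinv (fun μ ν => ∑ j, J.q j ν • (J.curl μ j - (J.dh μ).row j ᵥ* J.q)) :=
    J.contract_gtinv_swap fun μ ν => ∑ j, J.q j ν • (J.curl μ j - (J.dh μ).row j ᵥ* J.q)
  have h_At : contract J.gtinv (fun μ ν => ∑ j, J.q j ν • (J.curl μ j - (J.dh μ).row j ᵥ* J.q))
      = contract J.At (fun α i => (J.dh α).row i ᵥ* J.q - J.curl α i) := by
    rw [contract_At, ← neg_one_smul ℝ, ← contract_smul]
    simp only [neg_one_smul, ← Finset.sum_neg_distrib, ← smul_neg, neg_sub]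
  rw [funext₂ J.Γshift_eq, contract_add, contract_add, h_swap, h_At, contract_ht]
  module

/-- The coefficient of `∂_μ f` in the quantum Laplacian. -/
def derivCoeff : M → ℝ :=
  -contract J.gtinv J.Γ + (2 : ℝ) • contract J.At J.F + contract J.ht J.D

/-- The coefficient of `P_i f` in the quantum Laplacian. -/
def potentialCoeff : ι → ℝ :=
  contract J.gtinv J.E + (2 : ℝ) • contract J.At J.B + contract J.ht J.H

lemma derivCoeff_apply (μ : M) : J.derivCoeff μ
    = -(∑ α, ∑ β, J.Γ α β μ * J.gtinv α β) + 2 * (∑ α, ∑ j, J.F α j μ * J.At α j)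
      + ∑ j, ∑ k, J.D j k μ * J.ht j k := by
  simp only [derivCoeff, Pi.add_apply, Pi.neg_apply, Pi.smul_apply, contract_apply]
  simp only [contract, smul_eq_mul, mul_comm]

lemma potentialCoeff_apply (i : ι) : J.potentialCoeff i
    = (∑ α, ∑ β, J.E α β i * J.gtinv α β) + 2 * (∑ α, ∑ j, J.B α j i * J.At α j)
      + ∑ j, ∑ k, J.H j k i * J.ht j k := by
  simp only [potentialCoeff, Pi.add_apply, Pi.smul_apply, contract_apply]
  simp only [contract, smul_eq_mul, mul_comm]

theorem derivCoeff_eq : J.derivCoeff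
    = -contract J.gtinv J.Γt + (1 / 2 : ℝ) • J.gtinv *ᵥ contract J.hinv J.gradh := by
  have h_Γ : contract J.gtinv J.Γ = contract J.gtinv J.Γt
      + (1 / 2 : ℝ) • J.gtinv *ᵥ contract J.gtinv J.Γshift := by
    rw [funext₂ J.Γ_eq, contract_add, contract_smul, contract_mulVec]
  have h_F : contract J.At J.F = (1 / 2 : ℝ) • J.gtinv *ᵥ
      ((contract J.At (fun α i => (J.dh α).row i) - contract J.At J.twist) ᵥ* J.q
        - contract J.At J.curl) := by
    rw [funext₂ J.F_eq, contract_smul, contract_mulVec, contract_sub, contract_vecMul,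
      contract_sub]
  have h_D : contract J.ht J.D = (1 / 2 : ℝ) • J.gtinv *ᵥ
      (contract J.ht J.gradh + (2 : ℝ) • contract J.At J.twist ᵥ* J.q) := by
    rw [funext₂ J.D_eq, contract_smul, contract_mulVec, contract_sub, contract_vecMul,
      contract_ht_killing, Matrix.smul_vecMul, neg_smul, sub_neg_eq_add]
  rw [derivCoeff, h_Γ, h_F, h_D, contract_Γshift, contract_sub, contract_vecMul]
  simp only [Matrix.mulVec_add, Matrix.mulVec_sub, Matrix.mulVec_smul, Matrix.sub_vecMul]
  module

theorem potentialCoeff_eq : J.potentialCoeff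
    = -contract J.gtinv (fun α β => (J.dq α).col β) - J.q *ᵥ J.derivCoeff := by
  have h_E : contract J.gtinv J.E = J.q *ᵥ contract J.gtinv J.Γ
      - J.hinv *ᵥ contract J.gtinv (fun α β => (J.dA α).col β) := by
    rw [funext₂ J.E_eq_q_mulVec_Γ_sub, contract_sub, contract_mulVec, contract_smul,
      contract_mulVec, contract_add, J.contract_gtinv_swap fun α β => (J.dA α).col β,
      ← two_smul ℝ, Matrix.mulVec_smul]
    module
  have h_B : contract J.At J.B = -(1 / 2 : ℝ) • J.hinv *ᵥ
      (contract J.At (fun α i => (J.dh α).row i) - contract J.At J.twist)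
      - J.q *ᵥ contract J.At J.F := by
    rw [funext₂ J.B_eq_sub_q_mulVec_F, contract_sub, contract_smul, contract_mulVec,
      contract_mulVec, contract_sub]
  have h_H : contract J.ht J.H
      = -(J.hinv *ᵥ contract J.At J.twist) - J.q *ᵥ contract J.ht J.D := by
    rw [funext₂ J.H_eq_sub_q_mulVec_D, contract_sub, contract_sub, contract_smul, contract_smul,
      contract_mulVec, contract_mulVec, contract_ht_killing, contract_ht_c, Matrix.mulVec_smul]
    module
  have h_dq : contract J.gtinv (fun α β => (J.dq α).col β) = J.hinv *ᵥ
      (contract J.gtinv (fun α β => (J.dA α).col β)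
        + contract J.At (fun α i => (J.dh α).row i)) := by
    rw [contract_At, ← sub_eq_add_neg, ← contract_sub, ← contract_mulVec]
    congr! 3 with α β
    have h_row : ∑ i, J.q i β • (J.dh α).row i = J.dh α *ᵥ J.q.col β := by
      conv_rhs => rw [← (J.dh_isSymm α).eq, Matrix.mulVec_transpose, Matrix.vecMul_eq_sum]
      rfl
    rw [h_row]
    rfl
  rw [potentialCoeff, derivCoeff, h_E, h_B, h_H, h_dq]
  simp only [Matrix.mulVec_add, Matrix.mulVec_sub, Matrix.mulVec_smul, Matrix.mulVec_neg]
  module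

end FirstOrder

section Laplacian

variable {V : Type*} [AddCommGroup V] [Module ℝ V] (P : ι → V →ₗ[ℝ] V) (v : V) (dv : M → V)
  (ddv : M → M → V)

/-- The gauge-covariant derivative `∂_μ f - q^i_μ P_i f`, in terms of the value `v` and the partial
derivatives `dv` of `f`. -/
def covDeriv (μ : M) : V :=
  dv μ - ∑ i, J.q i μ • P i v

/-- The iterated gauge-covariant derivative `(∂_α - q^i_α P_i)(∂_β - q^j_β P_j) f`, in terms of the
value `v` and the partial derivatives `dv`, `ddv` of `f`. -/
def covHessian (α β : M) : V :=
  ddv α β - (∑ i, (J.dq α i β • P i v + J.q i β • P i (dv α)))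
    - ∑ i, J.q i α • P i (J.covDeriv P v dv β)

lemma contract_covHessian : contract J.gtinv (J.covHessian P v dv ddv)
    = contract J.gtinv ddv + (2 : ℝ) • contract J.At (fun α i => P i (dv α))
      + (contract J.ht (fun i j => P i (P j v)) - contract J.hinv (fun i j => P i (P j v)))
      - contract J.gtinv (fun α β => ∑ i, J.dq α i β • P i v) := by
  have h_swap : contract J.gtinv (fun α β => ∑ i, J.q i α • P i (dv β))
      = contract J.gtinv (fun α β => ∑ i, J.q i β • P i (dv α)) :=
    J.contract_gtinv_swap fun α β => ∑ i, J.q i β • P i (dv α)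
  have h_expand : J.covHessian P v dv ddv = fun α β => ddv α β
      - (∑ i, J.dq α i β • P i v) - (∑ i, J.q i β • P i (dv α)) - (∑ i, J.q i α • P i (dv β))
      + ∑ i, J.q i α • ∑ j, J.q j β • P i (P j v) := by
    ext α β
    simp only [covHessian, covDeriv, map_sub, map_sum, map_smul, smul_sub, Finset.sum_sub_distrib,
      Finset.sum_add_distrib]
    abel
  rw [h_expand, contract_add, contract_sub, contract_sub, contract_sub, h_swap, contract_At,
    contract_ht]
  module

lemma sum_potentialCoeff_smul_add_sum_derivCoeff_smul :
    (∑ i, J.potentialCoeff i • P i v) + ∑ μ, J.derivCoeff μ • dv μ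
      = (∑ μ, J.derivCoeff μ • J.covDeriv P v dv μ)
        - contract J.gtinv (fun α β => ∑ i, J.dq α i β • P i v) := by
  rw [potentialCoeff_eq]
  simp only [covDeriv, Pi.sub_apply, Pi.neg_apply, sub_smul, neg_smul, Finset.sum_sub_distrib,
    Finset.sum_neg_distrib, sum_contract_smul, sum_mulVec_smul, smul_sub, Matrix.col_apply]
  abel

lemma sum_derivCoeff_smul (w : M → V) : ∑ μ, J.derivCoeff μ • w μ
    = -contract J.gtinv (fun α β => ∑ μ, J.Γt α β μ • w μ)
      + (1 / 2 : ℝ) • contract J.gtinv (fun α β => contract J.hinv (J.dh α) • w β) := by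
  have h_log : ∑ μ, (J.gtinv *ᵥ contract J.hinv J.gradh) μ • w μ
      = contract J.gtinv (fun α β => contract J.hinv (J.dh α) • w β) := by
    rw [sum_mulVec_smul, ← contract_gtinv_swap]
    simp only [contract_apply, gradh, Finset.smul_sum, smul_comm (contract _ _)]
    exact Finset.sum_comm
  rw [derivCoeff_eq, ← sum_contract_smul, ← h_log]
  simp only [Pi.add_apply, Pi.neg_apply, Pi.smul_apply, add_smul, neg_smul, smul_assoc,
    Finset.sum_add_distrib, Finset.sum_neg_distrib, ← Finset.smul_sum]

theorem laplacian_eq :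
    contract J.gtinv ddv + contract J.ht (fun i j => P i (P j v))
        + (2 : ℝ) • contract J.At (fun α i => P i (dv α))
        + (∑ i, J.potentialCoeff i • P i v) + ∑ μ, J.derivCoeff μ • dv μ
      = contract J.gtinv (fun α β => J.covHessian P v dv ddv α β
          - ∑ μ, J.Γt α β μ • J.covDeriv P v dv μ)
        + contract J.hinv (fun i j => P i (P j v))
        + (1 / 2 : ℝ) • contract J.gtinv (fun α β =>
            contract J.hinv (J.dh α) • J.covDeriv P v dv β) := by
  rw [add_assoc, sum_potentialCoeff_smul_add_sum_derivCoeff_smul, sum_derivCoeff_smul,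
    contract_sub, contract_covHessian]
  abel

end Laplacian

end KaluzaKleinJet

section Calculus

lemma differentiableAt_det {X κ : Type*} [NormedAddCommGroup X] [NormedSpace ℝ X] [Fintype κ]
    [DecidableEq κ] {N : X → Matrix κ κ ℝ} {x : X}
    (hN : ∀ i j, DifferentiableAt ℝ (fun y => N y i j) x) :
    DifferentiableAt ℝ (fun y => (N y).det) x := by
  simp only [Matrix.det_apply']
  fun_prop

lemma differentiableAt_inv_apply {X κ : Type*} [NormedAddCommGroup X] [NormedSpace ℝ X]
    [Fintype κ] [DecidableEq κ] {M N : X → Matrix κ κ ℝ} {x : X}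
    (hM : ∀ i j, DifferentiableAt ℝ (fun y => M y i j) x) (hMN : ∀ᶠ y in 𝓝 x, M y * N y = 1)
    (i j : κ) : DifferentiableAt ℝ (fun y => N y i j) x := by
  have h_det : (M x).det ≠ 0 := (Matrix.isUnit_det_of_right_inverse hMN.self_of_nhds).ne_zero
  have h_adj : DifferentiableAt ℝ (fun y => (M y).adjugate i j) x := by
    simp only [Matrix.adjugate_apply]
    refine differentiableAt_det fun k l => ?_
    simp only [Matrix.updateRow_apply]
    split_ifs
    · exact differentiableAt_const _
    · exact hM k l
  refine (((differentiableAt_det hM).inv h_det).mul h_adj).congr_of_eventuallyEq ?_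
  filter_upwards [hMN] with y hy
  rw [← Matrix.inv_eq_right_inv hy, Matrix.inv_def, Ring.inverse_eq_inv']
  rfl

variable {n : ℕ} {ι W : Type*} [Fintype ι] [NormedAddCommGroup W] [NormedSpace ℝ W]
  {x : Fin n → ℝ}

lemma pd_congr {u v : (Fin n → ℝ) → W} (huv : u =ᶠ[𝓝 x] v) (μ : Fin n) :
    pd μ u x = pd μ v x := by
  rw [pd, pd, huv.fderiv_eq]

lemma pd_const (w : W) (μ : Fin n) : pd μ (fun _ => w) x = 0 := by
  simp [pd]

lemma pd_sub {u v : (Fin n → ℝ) → W} (hu : DifferentiableAt ℝ u x)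
    (hv : DifferentiableAt ℝ v x) (μ : Fin n) :
    pd μ (fun y => u y - v y) x = pd μ u x - pd μ v x := by
  simp only [pd, fderiv_fun_sub hu hv, sub_apply]

lemma pd_sum {u : ι → (Fin n → ℝ) → W}
    (hu : ∀ i, DifferentiableAt ℝ (u i) x) (μ : Fin n) :
    pd μ (fun y => ∑ i, u i y) x = ∑ i, pd μ (u i) x := by
  simp only [pd, fderiv_fun_sum fun i _ => hu i, sum_apply]

lemma pd_smul {c : (Fin n → ℝ) → ℝ} {u : (Fin n → ℝ) → W} (hc : DifferentiableAt ℝ c x)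
    (hu : DifferentiableAt ℝ u x) (μ : Fin n) :
    pd μ (fun y => c y • u y) x = pd μ c x • u x + c x • pd μ u x := by
  simp [pd, fderiv_fun_smul hc hu, add_comm]

lemma pd_clm_apply {W' : Type*} [NormedAddCommGroup W'] [NormedSpace ℝ W'] (L : W →L[ℝ] W')
    {u : (Fin n → ℝ) → W} (hu : DifferentiableAt ℝ u x) (μ : Fin n) :
    pd μ (fun y => L (u y)) x = L (pd μ u x) :=
  congrArg (· (Pi.single μ 1)) (L.hasFDerivAt.comp x hu.hasFDerivAt).fderiv

lemma differentiableAt_pd {u : (Fin n → ℝ) → W} (hu : ContDiffAt ℝ 2 u x) (μ : Fin n) :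
    DifferentiableAt ℝ (pd μ u) x :=
  ((hu.fderiv_right (m := 1) (by norm_num)).differentiableAt one_ne_zero).clm_apply
    (differentiableAt_const _)

/-- The gauge-covariant derivative `∂_μ - q^i_μ P_i`, with the gauge field acting through the
operators `P`. -/
def gaugeCovDeriv (q : (Fin n → ℝ) → Matrix ι (Fin n) ℝ) (P : ι → W →L[ℝ] W) (μ : Fin n)
    (u : (Fin n → ℝ) → W) : (Fin n → ℝ) → W :=
  fun y => pd μ u y - ∑ i, q y i μ • P i (u y)

lemma gaugeCovDeriv_mul_apply {κ : Type*} [Fintype κ] (B : (Fin n → ℝ) → Matrix ι κ ℝ)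
    (A : (Fin n → ℝ) → Matrix κ (Fin n) ℝ) (P : ι → W →L[ℝ] W) (μ : Fin n)
    (u : (Fin n → ℝ) → W) : gaugeCovDeriv (fun y => B y * A y) P μ u x
      = pd μ u x - ∑ i, ∑ k, (B x i k * A x k μ) • P i (u x) := by
  simp only [gaugeCovDeriv, Matrix.mul_apply, Finset.sum_smul]

lemma gaugeCovDeriv_gaugeCovDeriv {q : (Fin n → ℝ) → Matrix ι (Fin n) ℝ} {f : (Fin n → ℝ) → W}
    (P : ι → W →L[ℝ] W) (α β : Fin n) (hq : ∀ i, DifferentiableAt ℝ (fun y => q y i β) x)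
    (hf : ContDiffAt ℝ 2 f x) :
    gaugeCovDeriv q P α (gaugeCovDeriv q P β f) x
      = pd α (pd β f) x
        - (∑ i, (pd α (fun y => q y i β) x • P i (f x) + q x i β • P i (pd α f x)))
        - ∑ i, q x i α • P i (gaugeCovDeriv q P β f x) := by
  have h_f : DifferentiableAt ℝ f x := hf.differentiableAt two_ne_zero
  have h_P : ∀ i, DifferentiableAt ℝ (fun y => P i (f y)) x := fun i =>
    (P i).differentiableAt.comp x h_f
  have h_qP : ∀ i, DifferentiableAt ℝ (fun y => q y i β • P i (f y)) x := fun i =>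
    (hq i).fun_smul (h_P i)
  have h_pd : pd α (gaugeCovDeriv q P β f) x = pd α (pd β f) x
      - ∑ i, (pd α (fun y => q y i β) x • P i (f x) + q x i β • P i (pd α f x)) := by
    simp only [← pd_clm_apply (P _) h_f, ← pd_smul (hq _) (h_P _), ← pd_sum h_qP]
    exact pd_sub (differentiableAt_pd hf β) (.fun_sum fun i _ => h_qP i) α
  rw [gaugeCovDeriv, h_pd]

variable {κ κ' κ'' : Type*}

/-- The entrywise partial derivative `∂_μ N_{ij}` of a matrix-valued function. -/
def pdMatrix (μ : Fin n) (N : (Fin n → ℝ) → Matrix κ κ' ℝ) (x : Fin n → ℝ) : Matrix κ κ' ℝ :=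
  Matrix.of fun i j => pd μ (fun y => N y i j) x

lemma pdMatrix_mul [Fintype κ'] {M : (Fin n → ℝ) → Matrix κ κ' ℝ}
    {N : (Fin n → ℝ) → Matrix κ' κ'' ℝ} (hM : ∀ i j, DifferentiableAt ℝ (fun y => M y i j) x)
    (hN : ∀ i j, DifferentiableAt ℝ (fun y => N y i j) x) (μ : Fin n) :
    pdMatrix μ (fun y => M y * N y) x = pdMatrix μ M x * N x + M x * pdMatrix μ N x := by
  ext i k
  simp only [pdMatrix, Matrix.of_apply, Matrix.add_apply, Matrix.mul_apply,
    ← Finset.sum_add_distrib]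
  rw [pd_sum fun j => (hM i j).fun_mul (hN j k)]
  exact Finset.sum_congr rfl fun j _ => pd_smul (hM i j) (hN j k) μ

variable [Fintype κ] [DecidableEq κ] {M N : (Fin n → ℝ) → Matrix κ κ ℝ}

lemma pdMatrix_inv (hM : ∀ i j, DifferentiableAt ℝ (fun y => M y i j) x)
    (hMN : ∀ᶠ y in 𝓝 x, M y * N y = 1) (μ : Fin n) :
    pdMatrix μ N x = -(N x * pdMatrix μ M x * N x) := by
  have h_inv : N x * M x = 1 := mul_eq_one_comm.1 hMN.self_of_nhds
  have h_zero : pdMatrix μ M x * N x + M x * pdMatrix μ N x = 0 := by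
    rw [← pdMatrix_mul hM (differentiableAt_inv_apply hM hMN)]
    ext i j
    rw [pdMatrix, Matrix.of_apply, pd_congr (hMN.mono fun y hy => congrFun₂ hy i j), pd_const]
    rfl
  rw [Matrix.mul_assoc, eq_neg_of_add_eq_zero_left h_zero, Matrix.mul_neg, neg_neg,
    ← Matrix.mul_assoc, h_inv, Matrix.one_mul]

lemma pdMatrix_inv_mul {A : (Fin n → ℝ) → Matrix κ κ' ℝ}
    (hM : ∀ i j, DifferentiableAt ℝ (fun y => M y i j) x)
    (hA : ∀ i j, DifferentiableAt ℝ (fun y => A y i j) x)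
    (hMN : ∀ᶠ y in 𝓝 x, M y * N y = 1) (μ : Fin n) :
    pdMatrix μ (fun y => N y * A y) x
      = N x * (pdMatrix μ A x - pdMatrix μ M x * (N x * A x)) := by
  rw [pdMatrix_mul (differentiableAt_inv_apply hM hMN) hA, pdMatrix_inv hM hMN, Matrix.mul_sub]
  simp only [Matrix.neg_mul, Matrix.mul_assoc]
  abel

end Calculus

/-- Kaluza–Klein data on an open set `U` of spacetime: the metrics, the gauge field, their inverses
and a spacetime connection as functions, with the regularity that their first derivatives require.
Outside `U` the functions are unconstrained. -/
structure KaluzaKleinField {n : ℕ} (ι : Type*) [Fintype ι] [DecidableEq ι]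
    (U : Set (Fin n → ℝ)) where
  (g ginv gtinv : (Fin n → ℝ) → Matrix (Fin n) (Fin n) ℝ)
  (h hinv : (Fin n → ℝ) → Matrix ι ι ℝ)
  A : (Fin n → ℝ) → Matrix ι (Fin n) ℝ
  Γt : (Fin n → ℝ) → Fin n → Fin n → Fin n → ℝ
  c : ι → ι → ι → ℝ
  isOpen : IsOpen U
  h_differentiableOn : ∀ i j, DifferentiableOn ℝ (fun x => h x i j) U
  A_differentiableOn : ∀ i μ, DifferentiableOn ℝ (fun x => A x i μ) U
  g_isSymm : ∀ x ∈ U, (g x).IsSymm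
  h_isSymm : ∀ x ∈ U, (h x).IsSymm
  g_mul_ginv : ∀ x ∈ U, g x * ginv x = 1
  h_mul_hinv : ∀ x ∈ U, h x * hinv x = 1
  gtinv_mul : ∀ x ∈ U, gtinv x * (g x - (A x)ᵀ * hinv x * A x) = 1
  c_swap₁₃ : ∀ i j k, c i j k = -c k j i
  c_swap₂₃ : ∀ i j k, c i j k = -c i k j

namespace KaluzaKleinField

variable {n : ℕ} {ι : Type*} [Fintype ι] [DecidableEq ι] {U : Set (Fin n → ℝ)}
  (K : KaluzaKleinField ι U) {x : Fin n → ℝ} (hx : x ∈ U)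

include hx

lemma h_differentiableAt (i j : ι) : DifferentiableAt ℝ (fun y => K.h y i j) x :=
  (K.h_differentiableOn i j).differentiableAt (K.isOpen.mem_nhds hx)

lemma A_differentiableAt (i : ι) (μ : Fin n) : DifferentiableAt ℝ (fun y => K.A y i μ) x :=
  (K.A_differentiableOn i μ).differentiableAt (K.isOpen.mem_nhds hx)

lemma eventually_h_mul_hinv : ∀ᶠ y in 𝓝 x, K.h y * K.hinv y = 1 :=
  Filter.mem_of_superset (K.isOpen.mem_nhds hx) K.h_mul_hinv

/-- The first-order jet of the fields at a point of `U`. -/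
def jet : KaluzaKleinJet (Fin n) ι where
  g := K.g x
  ginv := K.ginv x
  gtinv := K.gtinv x
  h := K.h x
  hinv := K.hinv x
  A := K.A x
  dh α := pdMatrix α K.h x
  dA α := pdMatrix α K.A x
  Γt := K.Γt x
  c := K.c
  g_isSymm := K.g_isSymm x hx
  h_isSymm := K.h_isSymm x hx
  dh_isSymm α := Matrix.ext fun i j => pd_congr
    (Filter.mem_of_superset (K.isOpen.mem_nhds hx) fun y hy => (K.h_isSymm y hy).apply i j) α
  g_mul_ginv := K.g_mul_ginv x hx
  h_mul_hinv := K.h_mul_hinv x hx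
  gtinv_mul := K.gtinv_mul x hx
  c_swap₁₃ := K.c_swap₁₃
  c_swap₂₃ := K.c_swap₂₃

lemma pdMatrix_hinv (α : Fin n) : pdMatrix α K.hinv x = (K.jet hx).dhinv α :=
  pdMatrix_inv (K.h_differentiableAt hx) (K.eventually_h_mul_hinv hx) α

lemma pdMatrix_hinv_mul_A (α : Fin n) :
    pdMatrix α (fun y => K.hinv y * K.A y) x = (K.jet hx).dq α :=
  pdMatrix_inv_mul (K.h_differentiableAt hx) (K.A_differentiableAt hx)
    (K.eventually_h_mul_hinv hx) α

lemma jet_Γ (μ ν σ : Fin n) : (K.jet hx).Γ μ ν σ = K.Γt x μ ν σ + (1 / 2) * ∑ ρ, K.gtinv x σ ρ *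
    ((∑ i, K.A x i μ * (pdMatrix ν (fun y => K.hinv y * K.A y) x i ρ
          - pdMatrix ρ (fun y => K.hinv y * K.A y) x i ν))
      + (∑ i, K.A x i ν * (pdMatrix μ (fun y => K.hinv y * K.A y) x i ρ
          - pdMatrix ρ (fun y => K.hinv y * K.A y) x i μ))
      + ∑ i, ∑ j, K.A x i μ * K.A x j ν * pdMatrix ρ K.hinv x i j) := by
  simp only [K.pdMatrix_hinv hx, K.pdMatrix_hinv_mul_A hx]
  rfl

variable {V : Type*} [NormedAddCommGroup V] [NormedSpace ℝ V] (P : ι → V →L[ℝ] V)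
  {f : (Fin n → ℝ) → V}

lemma gaugeCovDeriv_gaugeCovDeriv_eq_covHessian (hf : ContDiffAt ℝ 2 f x) (α β : Fin n) :
    gaugeCovDeriv (fun y => K.hinv y * K.A y) P α
        (gaugeCovDeriv (fun y => K.hinv y * K.A y) P β f) x
      = (K.jet hx).covHessian (fun i => (P i).toLinearMap) (f x) (pd · f x)
        (fun α β => pd α (pd β f) x) α β := by
  have h_q : ∀ i, DifferentiableAt ℝ (fun y => (K.hinv y * K.A y) i β) x := fun i => by
    simp only [Matrix.mul_apply]
    exact .fun_sum fun j _ => (differentiableAt_inv_apply (K.h_differentiableAt hx)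
      (K.eventually_h_mul_hinv hx) i j).fun_mul (K.A_differentiableAt hx j β)
  rw [gaugeCovDeriv_gaugeCovDeriv P α β h_q hf, KaluzaKleinJet.covHessian,
    ← pdMatrix_hinv_mul_A]
  rfl

theorem laplacian_eq (hf : ContDiffAt ℝ 2 f x) :
    contract (K.gtinv x) (fun α β => pd α (pd β f) x)
        + contract (K.jet hx).ht (fun i j => P i (P j (f x)))
        + 2 • contract (K.jet hx).At (fun α i => pd α (fun y => P i (f y)) x)
        + (∑ i, (K.jet hx).potentialCoeff i • P i (f x))
        + ∑ μ, (K.jet hx).derivCoeff μ • pd μ f x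
      = contract (K.gtinv x) (fun α β =>
          gaugeCovDeriv (fun y => K.hinv y * K.A y) P α
              (gaugeCovDeriv (fun y => K.hinv y * K.A y) P β f) x
            - ∑ μ, K.Γt x α β μ • gaugeCovDeriv (fun y => K.hinv y * K.A y) P μ f x)
        + contract (K.hinv x) (fun i j => P i (P j (f x)))
        + (1 / 2 : ℝ) • contract (K.gtinv x) (fun α β =>
            contract (K.hinv x) (pdMatrix α K.h x)
              • gaugeCovDeriv (fun y => K.hinv y * K.A y) P β f x) := by
  simp only [K.gaugeCovDeriv_gaugeCovDeriv_eq_covHessian hx P hf,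
    pd_clm_apply (P _) (hf.differentiableAt two_ne_zero), ← ofNat_smul_eq_nsmul ℝ 2]
  exact (K.jet hx).laplacian_eq (fun i => (P i).toLinearMap) (f x) (pd · f x)
    fun α β => pd α (pd β f) x

end KaluzaKleinField

theorem stmt16_general {n : ℕ} {ι V : Type*} [Fintype ι] [DecidableEq ι] [NormedAddCommGroup V]
    [NormedSpace ℝ V] {U : Set (Fin n → ℝ)} (hU : IsOpen U)
    (c : ι → ι → ι → ℝ) (hc₁₃ : ∀ i j k, c i j k = -c k j i) (hc₂₃ : ∀ i j k, c i j k = -c i k j)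
    (g ginv : Fin n → Fin n → (Fin n → ℝ) → ℝ)
    (h hinv : ι → ι → (Fin n → ℝ) → ℝ) (A : ι → Fin n → (Fin n → ℝ) → ℝ)
    (hh : ∀ i j, DifferentiableOn ℝ (h i j) U) (hA : ∀ i μ, DifferentiableOn ℝ (A i μ) U)
    (hg_symm : ∀ μ ν x, g μ ν x = g ν μ x) (hh_symm : ∀ i j x, h i j x = h j i x)
    (hg_inv : ∀ x ∈ U, ∀ μ ν, ∑ ρ, g μ ρ x * ginv ρ ν x = if μ = ν then 1 else 0)
    (hh_inv : ∀ x ∈ U, ∀ i j, ∑ k, h i k x * hinv k j x = if i = j then 1 else 0)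
    (gt gtinv : Fin n → Fin n → (Fin n → ℝ) → ℝ)
    (hgt : ∀ μ ν x, gt μ ν x = g μ ν x - ∑ i, ∑ j, hinv i j x * A i μ x * A j ν x)
    (hgt_inv : ∀ x ∈ U, ∀ μ ν, ∑ ρ, gtinv μ ρ x * gt ρ ν x = if μ = ν then 1 else 0)
    (ht : ι → ι → (Fin n → ℝ) → ℝ)
    (hht : ∀ i j x, ht i j x = hinv i j x
        + ∑ k, ∑ l, ∑ μ, ∑ ν, hinv i k x * hinv l j x * gtinv μ ν x * A k ν x * A l μ x)
    (At : Fin n → ι → (Fin n → ℝ) → ℝ)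
    (hAt : ∀ α i x, At α i x = -∑ ν, ∑ j, gtinv α ν x * hinv i j x * A j ν x)
    (Γt : Fin n → Fin n → Fin n → (Fin n → ℝ) → ℝ)
    (_hΓt : ∀ σ μ ν x, Γt σ μ ν x = (1 / 2) * ∑ ρ, gtinv σ ρ x *
        (pd μ (gt ν ρ) x + pd ν (gt μ ρ) x - pd ρ (gt μ ν) x))
    (E : ι → Fin n → Fin n → (Fin n → ℝ) → ℝ) (F : Fin n → Fin n → ι → (Fin n → ℝ) → ℝ)
    (B : ι → Fin n → ι → (Fin n → ℝ) → ℝ) (Dq : Fin n → ι → ι → (Fin n → ℝ) → ℝ)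
    (H : ι → ι → ι → (Fin n → ℝ) → ℝ) (Γ : Fin n → Fin n → Fin n → (Fin n → ℝ) → ℝ)
    (hE : ∀ k α β x, E k α β x = -(1 / 2) * ∑ i, hinv k i x *
        (pd α (A i β) x + pd β (A i α) x - 2 * ∑ μ, A i μ x * Γ μ α β x))
    (hF : ∀ μ α i x, F μ α i x = (1 / 2) * ∑ β, gtinv β μ x *
        (-(pd α (A i β) x - pd β (A i α) x)
          + ∑ j, ∑ k, hinv j k x * A k β x * (pd α (h i j) x - ∑ l, A l α x * c i j l)))
    (hB : ∀ k α i x, B k α i x = (1 / 2) * ∑ j, ht j k x *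
        ((∑ μ, ∑ β, ginv μ β x * A j μ x * (pd α (A i β) x - pd β (A i α) x))
          + (∑ l, A l α x * c i j l) - pd α (h i j) x))
    (hDq : ∀ μ i j x, Dq μ i j x = (1 / 2) * ∑ α, gtinv μ α x *
        (pd α (h i j) x - ∑ k, ∑ m, A k α x * hinv m k x *
            ((∑ n', h n' i x * c j m n') + ∑ n', h n' j x * c i m n')))
    (hH : ∀ l i k x, H l i k x = (1 / 2) * (∑ j, ht j l x *
        ((∑ n', h n' i x * c k j n') + (∑ n', h n' k x * c i j n')
          - ∑ μ, ∑ α, A j μ x * ginv μ α x * pd α (h i k) x)) - (1 / 2) * c l i k)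
    (hΓ : ∀ σ μ ν x, Γ σ μ ν x = Γt σ μ ν x + (1 / 2) * ∑ ρ, gtinv σ ρ x *
        ((∑ i, A i μ x * (pd ν (fun y => ∑ j, hinv i j y * A j ρ y) x
              - pd ρ (fun y => ∑ j, hinv i j y * A j ν y) x))
          + (∑ i, A i ν x * (pd μ (fun y => ∑ j, hinv i j y * A j ρ y) x
              - pd ρ (fun y => ∑ j, hinv i j y * A j μ y) x))
          + ∑ i, ∑ j, A i μ x * A j ν x * pd ρ (hinv i j) x))
    (P : ι → V →L[ℝ] V) (f : (Fin n → ℝ) → V) (hf : ContDiffOn ℝ 2 f U)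
    (CD : Fin n → ((Fin n → ℝ) → V) → ((Fin n → ℝ) → V))
    (hCD : ∀ α u x, CD α u x = pd α u x - ∑ i, ∑ k, (hinv i k x * A k α x) • P i (u x)) :
    ∀ x ∈ U,
      (∑ α, ∑ β, gtinv α β x • pd α (pd β f) x)
      + (∑ i, ∑ j, ht i j x • P i (P j (f x)))
      + 2 • (∑ α, ∑ i, At α i x • pd α (fun y => P i (f y)) x)
      + (∑ i, ((∑ α, ∑ β, E i α β x * gtinv α β x)
            + 2 * (∑ α, ∑ j, B i α j x * At α j x)
            + ∑ j, ∑ k, H i j k x * ht j k x) • P i (f x))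
      + (∑ μ, (-(∑ α, ∑ β, Γ μ α β x * gtinv α β x)
            + 2 * (∑ α, ∑ j, F μ α j x * At α j x)
            + ∑ j, ∑ k, Dq μ j k x * ht j k x) • pd μ f x)
      = (∑ α, ∑ β, gtinv α β x • (CD α (CD β f) x - ∑ μ, Γt μ α β x • CD μ f x))
        + (∑ i, ∑ j, hinv i j x • P i (P j (f x)))
        + (1 / 2 : ℝ) • ∑ α, ∑ β,
            (gtinv α β x * ∑ i, ∑ j, hinv i j x * pd α (h i j) x) •
              (pd β f x - ∑ k, ∑ l, (hinv k l x * A l β x) • P k (f x)) := by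
  intro x hx
  let K : KaluzaKleinField ι U :=
    { g := fun x => .of (g · · x), ginv := fun x => .of (ginv · · x)
      gtinv := fun x => .of (gtinv · · x)
      h := fun x => .of (h · · x), hinv := fun x => .of (hinv · · x)
      A := fun x => .of (A · · x)
      Γt := fun x α β μ => Γt μ α β x
      c
      isOpen := hU
      h_differentiableOn := hh
      A_differentiableOn := hA
      g_isSymm := fun x _ => Matrix.ext fun μ ν => hg_symm ν μ x
      h_isSymm := fun x _ => Matrix.ext fun i j => hh_symm j i x
      g_mul_ginv := fun x hx => Matrix.ext fun μ ν => (hg_inv x hx μ ν).trans Matrix.one_apply.symm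
      h_mul_hinv := fun x hx => Matrix.ext fun i j => (hh_inv x hx i j).trans Matrix.one_apply.symm
      gtinv_mul := fun x hx => Matrix.ext fun μ ν => by
        rw [Matrix.one_apply, ← hgt_inv x hx, Matrix.mul_apply]
        simp only [Matrix.sub_apply, transpose_mul_mul_apply, Matrix.of_apply, hgt]
      c_swap₁₃ := hc₁₃
      c_swap₂₃ := hc₂₃ }
  have h_Γ : ∀ μ α β, Γ μ α β x = (K.jet hx).Γ α β μ := fun μ α β =>
    (hΓ μ α β x).trans (K.jet_Γ hx α β μ).symm
  have h_E : ∀ i α β, E i α β x = (K.jet hx).E α β i := fun i α β => by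
    simp only [hE, h_Γ]
    rfl
  have h_B : ∀ i α j, B i α j x = (K.jet hx).B α j i := fun i α j => by
    simp only [hB, hht]
    rfl
  have h_H : ∀ i j k, H i j k x = (K.jet hx).H j k i := fun i j k => by
    simp only [hH, hht]
    rfl
  have h_CD : CD = gaugeCovDeriv (fun y => K.hinv y * K.A y) P := funext₃ fun α u y =>
    (hCD α u y).trans (gaugeCovDeriv_mul_apply K.hinv K.A P α u).symm
  have h_lap := K.laplacian_eq hx P (hf.contDiffAt (hU.mem_nhds hx))
  simp only [KaluzaKleinJet.potentialCoeff_apply, KaluzaKleinJet.derivCoeff_apply] at h_lap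
  simp only [← hCD]
  simp only [h_Γ, h_E, h_B, h_H, h_CD, hF, hDq, hht, hAt, mul_smul]
  exact h_lap

lemma eps_swap₁₃ (i j k : Fin 3) : eps i j k = -eps k j i := by
  fin_cases i <;> fin_cases j <;> fin_cases k <;> norm_num [eps]

lemma eps_swap₂₃ (i j k : Fin 3) : eps i j k = -eps i k j := by
  fin_cases i <;> fin_cases j <;> fin_cases k <;> norm_num [eps]

/-- The QRG Laplacian on the product of spacetime and a fuzzy sphere with general metric
`h_{ij}(x)`, expressed through the quantum Levi-Civita connection coefficients, equals the
gauge-covariant Laplacian for `g̃` plus the fuzzy sphere Laplacian plus a coupling between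
the log-derivative of `h` and the covariant derivative of `f` (Proposition 6.1). -/
theorem stmt16 (n : ℕ) (hn : 1 ≤ n)
    (U : Set (Fin n → ℝ)) (hU : IsOpen U)
    (g ginv : Fin n → Fin n → (Fin n → ℝ) → ℝ)
    (h hinv : Fin 3 → Fin 3 → (Fin n → ℝ) → ℝ)
    (A : Fin 3 → Fin n → (Fin n → ℝ) → ℝ)
    (hg_smooth : ∀ μ ν, ContDiffOn ℝ (⊤ : ℕ∞) (g μ ν) U)
    (hh_smooth : ∀ i j, ContDiffOn ℝ (⊤ : ℕ∞) (h i j) U)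
    (hA_smooth : ∀ i μ, ContDiffOn ℝ (⊤ : ℕ∞) (A i μ) U)
    (hg_symm : ∀ μ ν x, g μ ν x = g ν μ x)
    (hh_symm : ∀ i j x, h i j x = h j i x)
    (hg_inv : ∀ x ∈ U, ∀ μ ν, ∑ ρ, g μ ρ x * ginv ρ ν x = if μ = ν then 1 else 0)
    (hg_inv' : ∀ x ∈ U, ∀ μ ν, ∑ ρ, ginv μ ρ x * g ρ ν x = if μ = ν then 1 else 0)
    (hh_inv : ∀ x ∈ U, ∀ i j, ∑ k, h i k x * hinv k j x = if i = j then 1 else 0)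
    (hh_inv' : ∀ x ∈ U, ∀ i j, ∑ k, hinv i k x * h k j x = if i = j then 1 else 0)
    -- the effective metric g̃ and its inverse
    (gt gtinv : Fin n → Fin n → (Fin n → ℝ) → ℝ)
    (hgt : ∀ μ ν x, gt μ ν x = g μ ν x - ∑ i, ∑ j, hinv i j x * A i μ x * A j ν x)
    (hgtinv_smooth : ∀ μ ν, ContDiffOn ℝ (⊤ : ℕ∞) (gtinv μ ν) U)
    (hgt_inv : ∀ x ∈ U, ∀ μ ν, ∑ ρ, gt μ ρ x * gtinv ρ ν x = if μ = ν then 1 else 0)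
    (hgt_inv' : ∀ x ∈ U, ∀ μ ν, ∑ ρ, gtinv μ ρ x * gt ρ ν x = if μ = ν then 1 else 0)
    -- h̃^{ij} and Ã^{αi}
    (ht : Fin 3 → Fin 3 → (Fin n → ℝ) → ℝ)
    (hht : ∀ i j x, ht i j x = hinv i j x
        + ∑ k, ∑ l, ∑ μ, ∑ ν, hinv i k x * hinv l j x * gtinv μ ν x * A k ν x * A l μ x)
    (At : Fin n → Fin 3 → (Fin n → ℝ) → ℝ)
    (hAt : ∀ α i x, At α i x = -∑ ν, ∑ j, gtinv α ν x * hinv i j x * A j ν x)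
    -- Γ̃
    (Γt : Fin n → Fin n → Fin n → (Fin n → ℝ) → ℝ)
    (hΓt : ∀ σ μ ν x, Γt σ μ ν x = (1/2) * ∑ ρ, gtinv σ ρ x *
        (pd μ (gt ν ρ) x + pd ν (gt μ ρ) x - pd ρ (gt μ ν) x))
    -- the quantum Levi-Civita connection coefficients
    (E : Fin 3 → Fin n → Fin n → (Fin n → ℝ) → ℝ)
    (F : Fin n → Fin n → Fin 3 → (Fin n → ℝ) → ℝ)
    (B : Fin 3 → Fin n → Fin 3 → (Fin n → ℝ) → ℝ)
    (Dq : Fin n → Fin 3 → Fin 3 → (Fin n → ℝ) → ℝ)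
    (H : Fin 3 → Fin 3 → Fin 3 → (Fin n → ℝ) → ℝ)
    (Γ : Fin n → Fin n → Fin n → (Fin n → ℝ) → ℝ)
    (hE : ∀ k α β x, E k α β x = -(1/2) * ∑ i, hinv k i x *
        (pd α (A i β) x + pd β (A i α) x - 2 * ∑ μ, A i μ x * Γ μ α β x))
    (hF : ∀ μ' α i x, F μ' α i x = (1/2) * ∑ β, gtinv β μ' x *
        (-(pd α (A i β) x - pd β (A i α) x)
          + ∑ j, ∑ k, hinv j k x * A k β x * (pd α (h i j) x - ∑ l, A l α x * eps i j l)))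
    (hB : ∀ k α i x, B k α i x = (1/2) * ∑ j, ht j k x *
        ((∑ μ, ∑ β, ginv μ β x * A j μ x * (pd α (A i β) x - pd β (A i α) x))
          + (∑ l, A l α x * eps i j l) - pd α (h i j) x))
    (hDq : ∀ μ' i j x, Dq μ' i j x = (1/2) * ∑ α, gtinv μ' α x *
        (pd α (h i j) x - ∑ k, ∑ m, A k α x * hinv m k x *
            ((∑ n', h n' i x * eps j m n') + ∑ n', h n' j x * eps i m n')))
    (hH : ∀ l' i k x, H l' i k x = (1/2) * (∑ j, ht j l' x *
        ((∑ n', h n' i x * eps k j n') + (∑ n', h n' k x * eps i j n')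
          - ∑ μ, ∑ α, A j μ x * ginv μ α x * pd α (h i k) x)) - (1/2) * eps l' i k)
    (hΓ : ∀ σ μ ν x, Γ σ μ ν x = Γt σ μ ν x + (1/2) * ∑ ρ, gtinv σ ρ x *
        ((∑ i, A i μ x * (pd ν (fun y => ∑ j, hinv i j y * A j ρ y) x
              - pd ρ (fun y => ∑ j, hinv i j y * A j ν y) x))
          + (∑ i, A i ν x * (pd μ (fun y => ∑ j, hinv i j y * A j ρ y) x
              - pd ρ (fun y => ∑ j, hinv i j y * A j μ y) x))
          + ∑ i, ∑ j, A i μ x * A j ν x * pd ρ (hinv i j) x))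
    -- the internal vector space and operators P_i ∈ End(V)
    (V : Type*) [NormedAddCommGroup V] [NormedSpace ℂ V]
    (P : Fin 3 → V →L[ℂ] V)
    (f : (Fin n → ℝ) → V)
    (hf_smooth : ContDiffOn ℝ (⊤ : ℕ∞) f U)
    -- the gauge-covariant derivative ∂_α − h^{ik} A_{kα} P_i
    (CD : Fin n → ((Fin n → ℝ) → V) → ((Fin n → ℝ) → V))
    (hCD : ∀ α u x, CD α u x = pd α u x - ∑ i, ∑ k, (hinv i k x * A k α x) • P i (u x)) :
    ∀ x ∈ U,
      (∑ α, ∑ β, gtinv α β x • pd α (pd β f) x)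
      + (∑ i, ∑ j, ht i j x • P i (P j (f x)))
      + 2 • (∑ α, ∑ i, At α i x • pd α (fun y => P i (f y)) x)
      + (∑ i, ((∑ α, ∑ β, E i α β x * gtinv α β x)
            + 2 * (∑ α, ∑ j, B i α j x * At α j x)
            + ∑ j, ∑ k, H i j k x * ht j k x) • P i (f x))
      + (∑ μ, (-(∑ α, ∑ β, Γ μ α β x * gtinv α β x)
            + 2 * (∑ α, ∑ j, F μ α j x * At α j x)
            + ∑ j, ∑ k, Dq μ j k x * ht j k x) • pd μ f x)
      = (∑ α, ∑ β, gtinv α β x • (CD α (CD β f) x - ∑ μ, Γt μ α β x • CD μ f x))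
        + (∑ i, ∑ j, hinv i j x • P i (P j (f x)))
        + (1/2 : ℝ) • ∑ α, ∑ β,
            (gtinv α β x * ∑ i, ∑ j, hinv i j x * pd α (h i j) x) •
              (pd β f x - ∑ k, ∑ l, (hinv k l x * A l β x) • P k (f x)) := by
  exact stmt16_general hU eps eps_swap₁₃ eps_swap₂₃ g ginv h hinv A
    (fun i j => (hh_smooth i j).differentiableOn (by norm_num))
    (fun i μ => (hA_smooth i μ).differentiableOn (by norm_num))
    hg_symm hh_symm hg_inv hh_inv gt gtinv hgt hgt_inv' ht hht At hAt Γt hΓt E F B Dq H Γ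
    hE hF hB hDq hH hΓ (fun i => (P i).restrictScalars ℝ) f (hf_smooth.of_le (by norm_cast)) CD hCD
end
end
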